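/- Let z_o be a 6-vector of the rank-10 𝒪-lattice Λ = Λ′ ⊥ Λ″ ⊥ H_𝒪 and Λ_o := {x ∈ Λ : ψ(x, z_o) = 0}. Call a 3-vector r ∈ Λ admissible if the 𝒪-submodule M_r := 𝒪z_o + 𝒪r is positive definite and primitive in Λ (i.e. M_r = (ℚ(ω)·M_r) ∩ Λ), and define its d-invariant d(r) as the determinant of the Gram matrix of ψ on an 𝒪-basis of M_r. Then d(r) ∈ {6, 9, 15, 18} for every admissible 3-vector r, and for any two admissible 3-vectors r, r' with d(r) = d(r') there exists g ∈ U(Λ) with g(Λ_o) = Λ_o and g(r) = r'. -/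

import Mathlib

open Polynomial

noncomputable section

/-- The Eisenstein ring `𝒪 = ℤ[ω]`, where `ω = e^{2πi/6}` is a primitive sixth root of
unity (so `ω² - ω + 1 = 0`), presented as `ℤ[X]/(X² - X + 1)`. -/
abbrev O : Type := AdjoinRoot (X ^ 2 - X + 1 : ℤ[X])

/-- `ω`, the distinguished primitive sixth root of unity in `𝒪`. -/
def ω : O := AdjoinRoot.root _

lemma ω_sq : ω ^ 2 - ω + 1 = 0 := by
  have h := AdjoinRoot.eval₂_root (X ^ 2 - X + 1 : ℤ[X])
  simpa [ω, eval₂_add, eval₂_sub, eval₂_pow, eval₂_X, eval₂_one] using h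

/-- Complex conjugation on the Eisenstein ring: the ring involution with
`conj ω = 1 - ω = ω⁻¹`. -/
def conj : O →+* O :=
  AdjoinRoot.lift (algebraMap ℤ O) (1 - ω) (by
    have h := ω_sq
    simp only [eval₂_add, eval₂_sub, eval₂_pow, eval₂_X, eval₂_one]
    ring_nf
    ring_nf at h
    linear_combination h)

/-- `θ := ω - ω⁻¹ = ω - conj ω = 2ω - 1`, a square root of `-3` in `𝒪`. -/
def θ : O := ω - conj ω

/-- The rank-10 𝒪-lattice `Λ = Λ′ ⊥ Λ″ ⊥ H_𝒪`, modelled on `Fin 10 → 𝒪`.  The basis is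
`(r₁′, …, r₄′, r₁″, …, r₄″, e, f)` (coordinates `0–3`, `4–7`, `8`, `9`).  This is the Gram
matrix: on each copy of `Λ⁴` (coordinates `0–3` and `4–7`) we have `ψ(rᵢ,rᵢ) = 3`,
`ψ(rᵢ,rᵢ₊₁) = θ`, `ψ(rᵢ,rⱼ) = 0` for `j > i+1`; the two copies and `H_𝒪` are mutually
orthogonal; and on `H_𝒪` we have `ψ(e,e) = ψ(f,f) = 0`, `ψ(e,f) = θ`, `ψ(f,e) = −θ`. -/
def gram10 : Fin 10 → Fin 10 → O := fun i j =>
  if (i : ℕ) < 8 ∧ (j : ℕ) < 8 then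
    (if (i : ℕ) / 4 = (j : ℕ) / 4 then
      (if i = j then 3
       else if (i : ℕ) + 1 = (j : ℕ) then θ
       else if (j : ℕ) + 1 = (i : ℕ) then conj θ
       else 0)
     else 0)
  else if (i : ℕ) = 8 ∧ (j : ℕ) = 9 then θ
  else if (i : ℕ) = 9 ∧ (j : ℕ) = 8 then -θ
  else 0

/-- The Hermitian form of `Λ`: 𝒪-linear in the first variable, conjugate-linear in the
second; it has hyperbolic signature `(9,1)`. -/
def psi10 (x y : Fin 10 → O) : O :=
  ∑ i : Fin 10, ∑ j : Fin 10, x i * conj (y j) * gram10 i j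

/-- `g` belongs to the unitary group `U(Λ)`. -/
def IsUnitary10 (g : (Fin 10 → O) ≃ₗ[O] (Fin 10 → O)) : Prop :=
  ∀ x y, psi10 (g x) (g y) = psi10 x y

/-- The `i`-th basis vector of `Λ` (so `b 0, …, b 3` are `r₁′, …, r₄′`;
`b 4, …, b 7` are `r₁″, …, r₄″`; `b 8 = e` and `b 9 = f`). -/
def b (i : Fin 10) : Fin 10 → O := Pi.single i 1

/-- `x ∈ Λ` is primitive: `x ∉ λΛ` for every non-unit `λ ∈ 𝒪`. -/
def IsPrimVec (x : Fin 10 → O) : Prop :=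
  ∀ a : O, (∃ y : Fin 10 → O, x = a • y) → IsUnit a

/-- A submodule is positive definite (for `psi10`): `ψ(x,x)` is a positive integer for
every nonzero `x` in it. -/
def PosDefOn (M : Submodule O (Fin 10 → O)) : Prop :=
  ∀ x ∈ M, x ≠ 0 → ∃ n : ℕ, 0 < n ∧ psi10 x x = (n : O)

/-- A submodule `M` is primitive (saturated) in `Λ`: `M = (ℚ(ω)·M) ∩ Λ`, i.e.
`a • x ∈ M` with `a ≠ 0` implies `x ∈ M`. -/
def IsPrimitiveSubmodule (M : Submodule O (Fin 10 → O)) : Prop :=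
  ∀ (a : O) (x : Fin 10 → O), a ≠ 0 → a • x ∈ M → x ∈ M

/-- `M_r := 𝒪z_o + 𝒪r`. -/
def Mr (zo x : Fin 10 → O) : Submodule O (Fin 10 → O) := Submodule.span O {zo, x}

/-- A 3-vector `r` is admissible (relative to `z_o`): `M_r = 𝒪z_o + 𝒪r` is positive
definite and primitive in `Λ`. -/
def Admissible (zo x : Fin 10 → O) : Prop :=
  psi10 x x = 3 ∧ PosDefOn (Mr zo x) ∧ IsPrimitiveSubmodule (Mr zo x)

/-- `M` has `d`-invariant `d`: the determinant of the Gram matrix of `ψ` on an 𝒪-basis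
`(e₁,e₂)` of `M` equals `d` (this is independent of the basis, as the units of `𝒪` have
norm one). -/
def HasDet (M : Submodule O (Fin 10 → O)) (d : O) : Prop :=
  ∃ e₁ e₂ : Fin 10 → O, e₁ ∈ M ∧ e₂ ∈ M ∧ Submodule.span O {e₁, e₂} = M ∧
    LinearIndependent O ![e₁, e₂] ∧
    psi10 e₁ e₁ * psi10 e₂ e₂ - psi10 e₁ e₂ * psi10 e₂ e₁ = d

namespace S11

abbrev QA := QuadraticAlgebra ℤ (-1) 1

def toQ : O →+* QA :=
  AdjoinRoot.lift (algebraMap ℤ QA) ⟨0, 1⟩ (by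
    simp only [eval₂_add, eval₂_sub, eval₂_pow, eval₂_X, eval₂_one]
    ext <;> simp [pow_two, QuadraticAlgebra.re_one, QuadraticAlgebra.im_one])

def cr (a : O) : ℤ := (toQ a).re
def ci (a : O) : ℤ := (toQ a).im

lemma toQ_ω : toQ ω = ⟨0, 1⟩ := by simp [toQ, ω]

lemma omega_mul : ω * ω = ω - 1 := by linear_combination ω_sq

@[simp] lemma conj_ω : conj ω = 1 - ω := by simp [conj, ω]

lemma theta_eq : θ = 2 * ω - 1 := by simp [θ]; ring

@[simp] lemma cr_ω : cr ω = 0 := by simp [cr, toQ_ω]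
@[simp] lemma ci_ω : ci ω = 1 := by simp [ci, toQ_ω]
@[simp] lemma cr_add (a b : O) : cr (a + b) = cr a + cr b := by simp [cr]
@[simp] lemma ci_add (a b : O) : ci (a + b) = ci a + ci b := by simp [ci]
@[simp] lemma cr_sub (a b : O) : cr (a - b) = cr a - cr b := by simp [cr]
@[simp] lemma ci_sub (a b : O) : ci (a - b) = ci a - ci b := by simp [ci]
@[simp] lemma cr_neg (a : O) : cr (-a) = -cr a := by simp [cr]
@[simp] lemma ci_neg (a : O) : ci (-a) = -ci a := by simp [ci]
@[simp] lemma cr_zero : cr 0 = 0 := by simp [cr]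
@[simp] lemma ci_zero : ci 0 = 0 := by simp [ci]
@[simp] lemma cr_one : cr 1 = 1 := by simp [cr, QuadraticAlgebra.re_one]
@[simp] lemma ci_one : ci 1 = 0 := by simp [ci, QuadraticAlgebra.im_one]
@[simp] lemma cr_mul (a b : O) : cr (a * b) = cr a * cr b - ci a * ci b := by simp [cr, ci]; ring
@[simp] lemma ci_mul (a b : O) : ci (a * b) = cr a * ci b + ci a * cr b + ci a * ci b := by
  simp [cr, ci]
@[simp] lemma cr_int (n : ℤ) : cr (n : O) = n := by simp [cr]
@[simp] lemma ci_int (n : ℤ) : ci (n : O) = 0 := by simp [ci]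
@[simp] lemma cr_nat (n : ℕ) : cr (n : O) = n := by simp [cr]
@[simp] lemma ci_nat (n : ℕ) : ci (n : O) = 0 := by simp [ci]
@[simp] lemma cr_ofNat (n : ℕ) [n.AtLeastTwo] : cr (ofNat(n) : O) = n := by
  exact cr_nat n
@[simp] lemma ci_ofNat (n : ℕ) [n.AtLeastTwo] : ci (ofNat(n) : O) = 0 := by
  exact ci_nat n
@[simp] lemma cr_θ : cr θ = -1 := by simp [theta_eq]
@[simp] lemma ci_θ : ci θ = 2 := by simp [theta_eq]

lemma exists_rep (a : O) : ∃ m n : ℤ, a = m + n * ω := by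
  induction a using AdjoinRoot.induction_on with
  | ih p =>
    induction p using Polynomial.induction_on' with
    | add p q hp hq =>
      obtain ⟨m, n, h⟩ := hp
      obtain ⟨m', n', h'⟩ := hq
      exact ⟨m + m', n + n', by rw [map_add, h, h']; push_cast; ring⟩
    | monomial k c =>
      have h : ∀ k : ℕ, ∃ m n : ℤ, ω ^ k = m + n * ω := by
        intro k
        induction k with
        | zero => exact ⟨1, 0, by simp⟩
        | succ k ih =>
          obtain ⟨m, n, h⟩ := ih
          refine ⟨-n, m + n, ?_⟩
          rw [pow_succ, h]; push_cast
          linear_combination (n : O) * omega_mul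
      obtain ⟨m, n, h⟩ := h k
      refine ⟨c * m, c * n, ?_⟩
      rw [← Polynomial.C_mul_X_pow_eq_monomial, map_mul, map_pow]
      have h1 : AdjoinRoot.mk (X ^ 2 - X + 1 : ℤ[X]) X = ω := rfl
      have h2 : AdjoinRoot.mk (X ^ 2 - X + 1 : ℤ[X]) (C c) = (c : O) := by simp
      rw [h1, h2, h]; push_cast; ring

lemma eq_rep (a : O) : a = cr a + ci a * ω := by
  obtain ⟨m, n, rfl⟩ := exists_rep a
  simp

lemma oext {a b : O} (h1 : cr a = cr b) (h2 : ci a = ci b) : a = b := by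
  rw [eq_rep a, eq_rep b, h1, h2]

lemma conj_rep (a : O) : conj a = cr a + ci a * (1 - ω) := by
  conv_lhs => rw [eq_rep a]
  simp

@[simp] lemma cr_conj (a : O) : cr (conj a) = cr a + ci a := by rw [conj_rep]; simp
@[simp] lemma ci_conj (a : O) : ci (conj a) = - ci a := by rw [conj_rep]; simp
@[simp] lemma conj_conj (a : O) : conj (conj a) = a := by apply oext <;> simp
@[simp] lemma conj_θ : conj θ = -θ := by apply oext <;> simp
lemma θ_sq : θ * θ = -3 := by apply oext <;> simp

/-- integer norm -/
def nrm (a : O) : ℤ := cr a ^ 2 + cr a * ci a + ci a ^ 2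

lemma nrm_cast (a : O) : (nrm a : O) = a * conj a := by
  apply oext <;> simp [nrm, pow_two] <;> ring
lemma nrm_mul (a b : O) : nrm (a * b) = nrm a * nrm b := by simp [nrm]; ring
@[simp] lemma nrm_conj (a : O) : nrm (conj a) = nrm a := by simp [nrm]; ring
@[simp] lemma nrm_neg (a : O) : nrm (-a) = nrm a := by simp [nrm]
lemma nrm_nonneg (a : O) : 0 ≤ nrm a := by
  unfold nrm; nlinarith [sq_nonneg (cr a + ci a), sq_nonneg (cr a), sq_nonneg (ci a)]
lemma nrm_eq_zero {a : O} : nrm a = 0 ↔ a = 0 := by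
  constructor
  · intro h
    unfold nrm at h
    have h1 : ci a = 0 := by
      nlinarith [sq_nonneg (cr a + ci a), sq_nonneg (cr a), sq_nonneg (ci a)]
    have h2 : cr a = 0 := by
      nlinarith [sq_nonneg (cr a + ci a), sq_nonneg (cr a), sq_nonneg (ci a)]
    exact oext (by simpa) (by simpa)
  · rintro rfl; simp [nrm]
lemma nrm_pos {a : O} (h : a ≠ 0) : 0 < nrm a :=
  lt_of_le_of_ne (nrm_nonneg a) (fun h' => h (nrm_eq_zero.1 h'.symm))
@[simp] lemma nrm_θ : nrm θ = 3 := by simp [nrm]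
@[simp] lemma nrm_int (n : ℤ) : nrm (n : O) = n ^ 2 := by simp [nrm]
@[simp] lemma nrm_zero : nrm 0 = 0 := by simp [nrm]
@[simp] lemma nrm_one : nrm 1 = 1 := by simp [nrm]

instance : Nontrivial O := ⟨⟨0, 1, fun h => by have := congrArg cr h; simp at this⟩⟩

instance : IsDomain O := by
  have : NoZeroDivisors O := ⟨fun {a b} h => by
    have := congrArg nrm h
    rw [nrm_mul, nrm_zero, mul_eq_zero, nrm_eq_zero, nrm_eq_zero] at this
    exact this⟩
  exact NoZeroDivisors.to_isDomain O

lemma int_inj {m n : ℤ} (h : (m : O) = n) : m = n := by simpa using congrArg cr h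

lemma θ_ne : θ ≠ 0 := fun h => by have := congrArg nrm h; simp at this

lemma three_eq : (3 : O) = -(θ * θ) := by rw [θ_sq]; ring

/-- reduction mod θ -/
def res : O →+* ZMod 3 :=
  AdjoinRoot.lift (algebraMap ℤ (ZMod 3)) (-1) (by
    simp only [eval₂_add, eval₂_sub, eval₂_pow, eval₂_X, eval₂_one]
    decide)

@[simp] lemma res_ω : res ω = -1 := by simp [res, ω]
@[simp] lemma res_θ : res θ = 0 := by simp [theta_eq, map_ofNat]; decide
lemma res_rep (a : O) : res a = cr a - ci a := by
  conv_lhs => rw [eq_rep a]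
  simp; ring
@[simp] lemma res_conj (a : O) : res (conj a) = res a := by
  simp [res_rep]
  have h : (3 : ZMod 3) = 0 := by decide
  linear_combination (ci a : ZMod 3) * h
lemma res_nrm (a : O) : (nrm a : ZMod 3) = res a ^ 2 := by
  have h := congrArg res (nrm_cast a)
  simp at h
  rw [h]; ring
lemma dvd_of_res {a : O} (h : res a = 0) : ∃ c, a = θ * c := by
  rw [res_rep] at h
  have : ((cr a - ci a : ℤ) : ZMod 3) = 0 := by simpa using h
  rw [ZMod.intCast_zmod_eq_zero_iff_dvd] at this
  obtain ⟨k, hk⟩ := this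
  -- a = cr + ci ω ; a = ci(1+ω)+3k
  push_cast at hk
  refine ⟨(cr a - 2 * k : ℤ) + (k - cr a : ℤ) * ω, ?_⟩
  apply oext <;> simp <;> linarith

lemma nrm_mod_of_res {a : O} (h : res a ≠ 0) : nrm a % 3 = 1 := by
  have h1 := res_nrm a
  have h2 : res a ^ 2 = 1 := by
    revert h; generalize res a = x; revert x; decide
  rw [h2] at h1
  have : ((nrm a - 1 : ℤ) : ZMod 3) = 0 := by push_cast; rw [h1]; ring
  rw [ZMod.intCast_zmod_eq_zero_iff_dvd] at this
  push_cast at this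
  omega

lemma nrm_mod (a : O) : nrm a % 3 = 0 ∨ nrm a % 3 = 1 := by
  by_cases h : res a = 0
  · left
    obtain ⟨c, rfl⟩ := dvd_of_res h
    rw [nrm_mul, nrm_θ]; omega
  · exact Or.inr (nrm_mod_of_res h)

lemma unit_of_nrm {a : O} (h : nrm a = 1) : a * conj a = 1 := by
  rw [← nrm_cast, h]; simp

/-- Euclidean division -/
lemma euclid (a b : O) (hb : b ≠ 0) : ∃ q, nrm (a - b * q) < nrm b := by
  set n := nrm b with hn
  have hpos : 0 < n := nrm_pos hb
  set g := a * conj b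
  have rnd : ∀ m : ℤ, ∃ q : ℤ, |2 * (m - n * q)| ≤ n := by
    intro m
    refine ⟨(2 * m + n) / (2 * n), ?_⟩
    have h1 := Int.mul_ediv_add_emod (2 * m + n) (2 * n)
    have h2 := Int.emod_nonneg (2 * m + n) (by omega : 2 * n ≠ 0)
    have h3 := Int.emod_lt_of_pos (2 * m + n) (by omega : 0 < 2 * n)
    rw [abs_le]; constructor <;> nlinarith
  obtain ⟨q1, h1⟩ := rnd (cr g)
  obtain ⟨q2, h2⟩ := rnd (ci g)
  refine ⟨q1 + q2 * ω, ?_⟩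
  have key : nrm (a - b * (q1 + q2 * ω)) * n = nrm (g - n * (q1 + q2 * ω)) := by
    rw [hn, nrm_cast, ← nrm_conj b, ← nrm_mul]
    congr 1
    ring
  have h3 : nrm (g - n * (q1 + q2 * ω)) = (cr g - n * q1) ^ 2 + (cr g - n * q1) * (ci g - n * q2) + (ci g - n * q2) ^ 2 := by
    simp [nrm]
  have h4 : nrm (g - n * (q1 + q2 * ω)) < n * n := by
    rw [h3]
    set A := cr g - n * q1
    set B := ci g - n * q2
    rw [abs_le] at h1 h2
    nlinarith [mul_nonneg (by linarith : 0 ≤ n - 2 * A) (by linarith : 0 ≤ n + 2 * A),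
      mul_nonneg (by linarith : 0 ≤ n - 2 * B) (by linarith : 0 ≤ n + 2 * B), sq_nonneg (A - B), mul_pos hpos hpos]
  rw [← key] at h4
  exact lt_of_mul_lt_mul_right h4 hpos.le

lemma principal (I : Ideal O) : ∃ c, I = Ideal.span {c} := by
  by_cases hI : ∃ a ∈ I, a ≠ 0
  · obtain ⟨c, ⟨hc, hc0⟩, hmin⟩ := WellFounded.has_min
      (measure fun a : O => (nrm a).toNat).wf {a | a ∈ I ∧ a ≠ 0} hI
    refine ⟨c, le_antisymm (fun x hx => ?_) (by simpa [Ideal.span_le] using hc)⟩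
    obtain ⟨q, hq⟩ := euclid x c hc0
    rw [Ideal.mem_span_singleton]
    by_contra hcon
    refine hmin (x - c * q) ⟨I.sub_mem hx (I.mul_mem_right _ hc), fun h => hcon ⟨q, sub_eq_zero.1 h⟩⟩ ?_
    have := nrm_nonneg (x - c * q)
    change (nrm (x - c * q)).toNat < (nrm c).toNat
    omega
  · push Not at hI
    refine ⟨0, ?_⟩
    ext x
    simp only [Ideal.mem_span_singleton, zero_dvd_iff]
    exact ⟨hI x, fun h => h ▸ I.zero_mem⟩

lemma small_nrm (a : O) : nrm a ≠ 2 ∧ nrm a ≠ 5 ∧ nrm a ≠ 6 := by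
  have h := nrm_mod a
  refine ⟨by omega, by omega, fun h6 => ?_⟩
  have : ∃ k, cr a = 2 * k ∨ cr a = 2 * k + 1 := ⟨cr a / 2, by omega⟩
  obtain ⟨k, hk⟩ := this
  have : ∃ l, ci a = 2 * l ∨ ci a = 2 * l + 1 := ⟨ci a / 2, by omega⟩
  obtain ⟨l, hl⟩ := this
  unfold nrm at h6
  rcases hk with hk | hk <;> rcases hl with hl | hl <;> rw [hk, hl] at h6 <;> ring_nf at h6 <;> omega

/-- elements of norm 0,1,3,4 are unit multiples of 0,1,θ,2 -/
lemma assoc_of_small (a : O) (h : nrm a < 6) : ∃ u c : O, u * conj u = 1 ∧ a = u * c ∧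
    (c = 0 ∨ c = 1 ∨ c = θ ∨ c = 2) ∧ nrm c = nrm a := by
  by_cases h3 : res a = 0
  · obtain ⟨c, rfl⟩ := dvd_of_res h3
    rw [nrm_mul, nrm_θ] at h
    have := nrm_nonneg c
    have : nrm c = 0 ∨ nrm c = 1 := by omega
    rcases this with h0 | h1
    · exact ⟨1, 0, by simp, by rw [nrm_eq_zero.1 h0]; simp, by simp, by rw [nrm_mul, h0]; simp⟩
    · exact ⟨c, θ, unit_of_nrm h1, by ring, by simp, by rw [nrm_mul, h1]; simp⟩
  · have := nrm_mod_of_res h3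
    have := nrm_nonneg a
    have : nrm a = 1 ∨ nrm a = 4 := by omega
    rcases this with h1 | h4
    · exact ⟨a, 1, unit_of_nrm h1, by ring, by simp, by rw [h1]; simp⟩
    · have : ∃ k, cr a = 2 * k ∨ cr a = 2 * k + 1 := ⟨cr a / 2, by omega⟩
      obtain ⟨k, hk⟩ := this
      have : ∃ l, ci a = 2 * l ∨ ci a = 2 * l + 1 := ⟨ci a / 2, by omega⟩
      obtain ⟨l, hl⟩ := this
      have h4' := h4
      unfold nrm at h4'
      have hkl : cr a = 2 * k ∧ ci a = 2 * l := by
        rcases hk with hk | hk <;> rcases hl with hl | hl <;> rw [hk, hl] at h4' <;> ring_nf at h4' <;> omega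
      have e : a = (k + l * ω) * 2 := by apply oext <;> simp [hkl] <;> ring
      have e2 : nrm (2 : O) = 4 := by simp [nrm]
      refine ⟨k + l * ω, 2, unit_of_nrm ?_, e, by simp, by rw [h4]; exact e2⟩
      have := congrArg nrm e
      rw [nrm_mul, e2] at this; omega

end S11

namespace S11

def D8 (m : Fin 8 → ℤ) : Prop := (∀ i, (m i - m 7) % 2 = 0) ∧ (∑ i, m i) % 4 = 0

lemma cover (p : Fin 8 → ℚ) : ∃ m, D8 m ∧ (∑ i, (p i - m i / 2) ^ 2 < 1 ∨
    (∑ i, (p i - m i / 2) ^ 2 = 1 ∧ ∃ m', D8 m' ∧ ∀ i, 4 * p i = m' i)) := by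
  -- rounding data
  obtain ⟨n, s, u, hs, hu0, hu1, hp⟩ : ∃ (n s : Fin 8 → ℤ) (u : Fin 8 → ℚ),
      (∀ i, s i = 1 ∨ s i = -1) ∧ (∀ i, 0 ≤ u i) ∧ (∀ i, u i ≤ 1 / 2) ∧
      (∀ i, p i = n i + s i * u i) := by
    refine ⟨fun i => round (p i), fun i => if 0 ≤ p i - round (p i) then 1 else -1,
      fun i => |p i - round (p i)|, fun i => ?_, fun i => abs_nonneg _, fun i => abs_sub_round _,
      fun i => ?_⟩
    · dsimp only; split_ifs <;> simp
    · dsimp only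
      split_ifs with h
      · rw [abs_of_nonneg h]; push_cast; ring
      · rw [abs_of_neg (not_le.1 h)]; push_cast; ring
  have hs2 : ∀ i, (s i : ℚ) ^ 2 = 1 := fun i => by rcases hs i with h | h <;> rw [h] <;> norm_num
  obtain ⟨iM, -, hM⟩ := Finset.exists_max_image Finset.univ u ⟨0, Finset.mem_univ _⟩
  obtain ⟨im, -, hm⟩ := Finset.exists_min_image Finset.univ u ⟨0, Finset.mem_univ _⟩
  set A := ∑ i, u i ^ 2 with hA
  set S := ∑ i, u i with hS
  -- candidates
  have c1 : (∑ i, n i) % 2 = 0 → ∃ m, D8 m ∧ ∑ i, (p i - m i / 2) ^ 2 = A := by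
    intro h
    refine ⟨fun i => 2 * n i, ⟨fun i => by dsimp only; omega, by rw [← Finset.mul_sum]; omega⟩, ?_⟩
    refine Finset.sum_congr rfl fun i _ => ?_
    rw [hp]; push_cast; linear_combination u i ^ 2 * hs2 i
  have c1' : (∑ i, n i) % 2 ≠ 0 → ∃ m, D8 m ∧ ∑ i, (p i - m i / 2) ^ 2 = A + 1 - 2 * u iM := by
    intro h
    refine ⟨fun i => 2 * n i + if i = iM then 2 * s i else 0, ⟨fun i => ?_, ?_⟩, ?_⟩
    · dsimp only; split_ifs <;> omega
    · rw [Finset.sum_add_distrib, ← Finset.mul_sum]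
      simp
      rcases hs iM with h' | h' <;> rw [h'] <;> omega
    · have : ∀ i, (p i - ((2 * n i + if i = iM then 2 * s i else 0 : ℤ) : ℚ) / 2) ^ 2 =
          u i ^ 2 + if i = iM then 1 - 2 * u i else 0 := by
        intro i
        rw [hp]; split_ifs
        · push_cast; linear_combination (u i ^ 2 + 1 - 2 * u i) * hs2 i
        · push_cast; linear_combination u i ^ 2 * hs2 i
      simp only [this, Finset.sum_add_distrib]
      simp; ring
  have hB : ∑ i, (u i - 1 / 2) ^ 2 = A - S + 2 := by
    rw [hA, hS, ← Finset.sum_sub_distrib]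
    simp only [Fin.sum_univ_eight]; ring
  have hsum2 : (∑ i, (2 * n i + s i)) % 2 = 0 := by
    have : ∀ i, ∃ k, s i = 2 * k + 1 := fun i => by
      rcases hs i with h | h
      · exact ⟨0, by omega⟩
      · exact ⟨-1, by omega⟩
    choose k hk using this
    simp only [Fin.sum_univ_eight, hk]; omega
  have c2 : (∑ i, (2 * n i + s i)) % 4 = 0 → ∃ m, D8 m ∧ ∑ i, (p i - m i / 2) ^ 2 = A - S + 2 := by
    intro h
    refine ⟨fun i => 2 * n i + s i, ⟨fun i => ?_, h⟩, ?_⟩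
    · dsimp only; rcases hs i with h | h <;> rcases hs 7 with h' | h' <;> rw [h, h'] <;> omega
    rw [← hB]
    refine Finset.sum_congr rfl fun i _ => ?_
    rw [hp]; push_cast; linear_combination (u i - 1 / 2) ^ 2 * hs2 i
  have c2' : (∑ i, (2 * n i + s i)) % 4 ≠ 0 →
      ∃ m, D8 m ∧ ∑ i, (p i - m i / 2) ^ 2 = A - S + 2 + 2 * u im := by
    intro h
    refine ⟨fun i => (2 * n i + s i) + if i = im then - 2 * s i else 0, ⟨fun i => ?_, ?_⟩, ?_⟩
    · dsimp only; rcases hs i with h | h <;> rcases hs 7 with h' | h' <;> rw [h, h'] <;>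
        split_ifs <;> omega
    · rw [Finset.sum_add_distrib]
      simp only [Finset.sum_ite_eq', Finset.mem_univ, if_true]
      rcases hs im with h' | h' <;> rw [h'] <;> omega
    · have : ∀ i, (p i - ((2 * n i + s i + if i = im then - 2 * s i else 0 : ℤ) : ℚ) / 2) ^ 2 =
          (u i - 1 / 2) ^ 2 + if i = im then 2 * u i else 0 := by
        intro i
        rw [hp]; split_ifs
        · push_cast; linear_combination (u i + 1 / 2) ^ 2 * hs2 i
        · push_cast; linear_combination (u i - 1 / 2) ^ 2 * hs2 i
      simp only [this, Finset.sum_add_distrib]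
      rw [hB]
      simp
  set M := u iM with hMdef
  set m0 := u im with hmdef
  have hM1 : M ≤ 1 / 2 := hu1 _
  have hm1 : 0 ≤ m0 := hu0 _
  have hmM : m0 ≤ M := hM _ (Finset.mem_univ _)
  by_cases h1 : A + 1 - 2 * M < 1
  · by_cases hn : (∑ i, n i) % 2 = 0
    · obtain ⟨m, a, b⟩ := c1 hn; exact ⟨m, a, Or.inl (by linarith)⟩
    · obtain ⟨m, a, b⟩ := c1' hn; exact ⟨m, a, Or.inl (by linarith)⟩
  by_cases h2 : A - S + 2 + 2 * m0 < 1
  · by_cases hn : (∑ i, (2 * n i + s i)) % 4 = 0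
    · obtain ⟨m, a, b⟩ := c2 hn; exact ⟨m, a, Or.inl (by linarith)⟩
    · obtain ⟨m, a, b⟩ := c2' hn; exact ⟨m, a, Or.inl (by linarith)⟩
  push Not at h1 h2
  have hchord : A ≤ (m0 + M) * S - 8 * (m0 * M) := by
    have : ∑ i, ((m0 + M) * u i - m0 * M - u i ^ 2) = (m0 + M) * S - 8 * (m0 * M) - A := by
      rw [hA, hS]; simp only [Fin.sum_univ_eight]; ring
    have h0 : 0 ≤ ∑ i, ((m0 + M) * u i - m0 * M - u i ^ 2) := Finset.sum_nonneg fun i _ => by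
      have a := hM i (Finset.mem_univ _)
      have b := hm i (Finset.mem_univ _)
      nlinarith [mul_nonneg (sub_nonneg.2 a) (sub_nonneg.2 b)]
    linarith
  have hd : (M - m0) * (1 - 2 * (M - m0)) ≤ 0 := by
    nlinarith [mul_nonneg (by linarith : 0 ≤ 1 - m0 - M) (by linarith : 0 ≤ A - 2 * M),
      mul_nonneg (by linarith : 0 ≤ m0 + M) (by linarith : 0 ≤ 1 + A + 2 * m0 - S)]
  have hd' : M - m0 = 0 ∨ M - m0 = 1 / 2 := by
    by_contra hcon
    push Not at hcon
    have a : 0 < M - m0 := lt_of_le_of_ne (by linarith) (Ne.symm hcon.1)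
    have b : M - m0 < 1 / 2 := lt_of_le_of_ne (by linarith) hcon.2
    nlinarith [mul_pos a (by linarith : 0 < 1 - 2 * (M - m0))]
  rcases hd' with hd | hd
  · -- all equal
    have hall : ∀ i, u i = M := fun i => by
      have a := hM i (Finset.mem_univ _)
      have b := hm i (Finset.mem_univ _)
      linarith
    have hA' : A = 8 * M ^ 2 := by rw [hA]; simp only [hall, Fin.sum_univ_eight]; ring
    have hS' : S = 8 * M := by rw [hS]; simp only [hall, Fin.sum_univ_eight]; ring
    have hcase : M = 0 ∨ M = 1 / 4 ∨ M = 1 / 2 := by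
      rw [hA', hS'] at h2
      rw [hA'] at h1
      by_contra hcon
      push Not at hcon
      obtain ⟨a, b, c⟩ := hcon
      have a' : 0 < M := lt_of_le_of_ne (by linarith) (Ne.symm a)
      have c' : M < 1 / 2 := lt_of_le_of_ne hM1 c
      rcases lt_or_gt_of_ne b with b' | b'
      · nlinarith [mul_pos a' (by linarith : 0 < 1 / 4 - M)]
      · nlinarith [mul_pos (by linarith : 0 < 1 / 2 - M) (by linarith : 0 < M - 1 / 4)]
    rcases hcase with h | h | h
    · by_cases hn : (∑ i, n i) % 2 = 0
      · obtain ⟨m, a, b⟩ := c1 hn; exact ⟨m, a, Or.inl (by rw [b, hA', h]; norm_num)⟩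
      · obtain ⟨m, a, b⟩ := c1' hn
        refine ⟨m, a, Or.inr ⟨by rw [b, hA', h]; norm_num, fun i => 4 * n i, ⟨fun i => by dsimp only; omega, ?_⟩,
          fun i => ?_⟩⟩
        · rw [← Finset.mul_sum]; omega
        · rw [hp, hall, h]; push_cast; ring
    · by_cases hn : (∑ i, n i) % 2 = 0
      · obtain ⟨m, a, b⟩ := c1 hn; exact ⟨m, a, Or.inl (by rw [b, hA', h]; norm_num)⟩
      by_cases hn' : (∑ i, (2 * n i + s i)) % 4 = 0
      · obtain ⟨m, a, b⟩ := c2 hn'; exact ⟨m, a, Or.inl (by rw [b, hA', hS', h]; norm_num)⟩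
      obtain ⟨m, a, b⟩ := c1' hn
      refine ⟨m, a, Or.inr ⟨by rw [b, hA', h]; norm_num, fun i => 4 * n i + s i, ⟨fun i => ?_, ?_⟩,
        fun i => ?_⟩⟩
      · dsimp only; rcases hs i with h | h <;> rcases hs 7 with h' | h' <;> rw [h, h'] <;> omega
      · rw [Finset.sum_add_distrib, ← Finset.mul_sum] at hn' hsum2 ⊢; omega
      · rw [hp, hall, h]; push_cast; ring
    · by_cases hn' : (∑ i, (2 * n i + s i)) % 4 = 0
      · obtain ⟨m, a, b⟩ := c2 hn'; exact ⟨m, a, Or.inl (by rw [b, hA', hS', h]; norm_num)⟩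
      obtain ⟨m, a, b⟩ := c2' hn'
      refine ⟨m, a, Or.inr ⟨by rw [b, hA', hS', show m0 = M by linarith, h]; norm_num,
        fun i => 2 * (2 * n i + s i), ⟨fun i => by dsimp only; omega, ?_⟩, fun i => ?_⟩⟩
      · rw [← Finset.mul_sum]; omega
      · rw [hp, hall, h]; push_cast; ring
  · have hMe : M = 1 / 2 := by linarith
    have hme : m0 = 0 := by linarith
    rw [hMe, hme] at hchord
    rw [hMe] at h1
    rw [hme] at h2
    have hSe : S = 2 := by linarith
    have hAe : A = 1 := by linarith
    have hz : ∑ i, u i * (1 / 2 - u i) = 0 := by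
      have : ∑ i, u i * (1 / 2 - u i) = S / 2 - A := by
        rw [hA, hS]; simp only [Fin.sum_univ_eight]; ring
      rw [this, hSe, hAe]; norm_num
    rw [Finset.sum_eq_zero_iff_of_nonneg
      (fun i _ => mul_nonneg (hu0 i) (by linarith [hu1 i]))] at hz
    have hk : ∀ i, ∃ k : ℤ, (k : ℚ) = 2 * u i := fun i => by
      rcases mul_eq_zero.1 (hz i (Finset.mem_univ _)) with h | h
      · exact ⟨0, by rw [h]; norm_num⟩
      · exact ⟨1, by push_cast; linarith⟩
    choose k hk using hk
    have hksum : ∑ i, k i = 4 := by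
      have : ((∑ i, k i : ℤ) : ℚ) = 2 * S := by
        push_cast; simp only [hk]; rw [hS, Finset.mul_sum]
      rw [hSe] at this
      exact_mod_cast (by linarith : ((∑ i, k i : ℤ) : ℚ) = 4)
    have hm' : ∃ m', D8 m' ∧ ∀ i, 4 * p i = m' i := by
      refine ⟨fun i => 4 * n i + 2 * (s i * k i), ⟨fun i => by dsimp only; omega, ?_⟩, fun i => ?_⟩
      · have : ∀ i, ∃ l, s i * k i = k i + 2 * l := fun i => by
          rcases hs i with h | h
          · exact ⟨0, by rw [h]; ring⟩
          · exact ⟨-k i, by rw [h]; ring⟩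
        choose l hl using this
        simp only [hl, Finset.sum_add_distrib, ← Finset.mul_sum, hksum]
        omega
      · rw [hp]; push_cast; rw [hk]; ring
    by_cases hn : (∑ i, n i) % 2 = 0
    · obtain ⟨m, a, b⟩ := c1 hn
      exact ⟨m, a, Or.inr ⟨by rw [b, hAe], hm'⟩⟩
    · obtain ⟨m, a, b⟩ := c1' hn
      exact ⟨m, a, Or.inr ⟨by rw [b, hAe, hMe]; norm_num, hm'⟩⟩

end S11

namespace S11

abbrev E := Fin 4 → O

lemma eext {x y : E} (h0 : x 0 = y 0) (h1 : x 1 = y 1) (h2 : x 2 = y 2) (h3 : x 3 = y 3) :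
    x = y := by
  funext i; fin_cases i <;> assumption

def κf (x y : E) : O :=
  -θ * (x 0 * conj (y 0) + x 1 * conj (y 1) + x 2 * conj (y 2) + x 3 * conj (y 3))
    + x 0 * conj (y 1) - x 1 * conj (y 0) + x 1 * conj (y 2) - x 2 * conj (y 1)
    + x 2 * conj (y 3) - x 3 * conj (y 2)

def κ : E →ₗ[O] E →ₛₗ[conj] O :=
  LinearMap.mk₂'ₛₗ (RingHom.id O) conj κf
    (by intros; simp [κf]; ring) (by intros; simp [κf]; ring)
    (by intros; simp [κf]; ring) (by intros; simp [κf]; ring)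

lemma κ_apply (x y : E) : κ x y =
  -θ * (x 0 * conj (y 0) + x 1 * conj (y 1) + x 2 * conj (y 2) + x 3 * conj (y 3))
    + x 0 * conj (y 1) - x 1 * conj (y 0) + x 1 * conj (y 2) - x 2 * conj (y 1)
    + x 2 * conj (y 3) - x 3 * conj (y 2) := rfl

lemma κ_skew (x y : E) : κ y x = - conj (κ x y) := by
  simp [κ_apply]; ring

def Q (x : E) : ℤ := nrm (x 0) + nrm (x 1) + nrm (x 2) + nrm (x 3)
  - ci (x 0 * conj (x 1)) - ci (x 1 * conj (x 2)) - ci (x 2 * conj (x 3))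

lemma κ_self (x : E) : κ x x = -θ * (Q x : O) := by
  apply oext
  · simp only [κ_apply, Q, nrm, cr_mul, ci_mul, cr_add, ci_add, cr_sub, ci_sub, cr_neg, ci_neg, cr_conj, ci_conj, cr_θ, ci_θ, cr_int, ci_int]; ring
  · simp only [κ_apply, Q, nrm, cr_mul, ci_mul, cr_add, ci_add, cr_sub, ci_sub, cr_neg, ci_neg, cr_conj, ci_conj, cr_θ, ci_θ, cr_int, ci_int]; ring

lemma Q_of_κ {x : E} {n : ℤ} (h : κ x x = -θ * (n : O)) : Q x = n := by
  rw [κ_self] at h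
  exact int_inj (mul_left_cancel₀ (neg_ne_zero.2 θ_ne) h)

lemma Q_smul (a : O) (x : E) : Q (a • x) = nrm a * Q x := by
  apply Q_of_κ
  simp only [map_smul, LinearMap.smul_apply, LinearMap.map_smulₛₗ, κ_self, smul_eq_mul]
  push_cast
  rw [nrm_cast]; ring

/-- real coordinates -/
def Lc (x : E) : Fin 8 → ℤ := ![
  2 * cr (x 0) + 2 * ci (x 0) - 2 * cr (x 1) - ci (x 2),
  2 * cr (x 0) + 2 * cr (x 1) + 2 * ci (x 1) + ci (x 2),
  2 * ci (x 0) + ci (x 2),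
  2 * ci (x 1) - 2 * cr (x 2) - ci (x 2),
  2 * cr (x 2) + ci (x 2) + 2 * ci (x 3),
  ci (x 2) - 2 * cr (x 3) - 2 * ci (x 3),
  ci (x 2) - 2 * cr (x 3),
  ci (x 2)]

lemma Q_L (x : E) : 8 * Q x = ∑ j, Lc x j ^ 2 := by
  simp [Fin.sum_univ_eight, Lc, Q, nrm]; ring

lemma L_inj {x y : E} (h : ∀ j, Lc x j = Lc y j) : x = y := by
  have h0 := h 0; have h1 := h 1; have h2 := h 2; have h3 := h 3
  have h4 := h 4; have h5 := h 5; have h6 := h 6; have h7 := h 7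
  simp [Lc] at h0 h1 h2 h3 h4 h5 h6 h7
  apply eext <;> apply oext <;> omega

lemma L_surj {m : Fin 8 → ℤ} (h : D8 m) : ∃ x : E, ∀ j, Lc x j = m j := by
  obtain ⟨h1, h2⟩ := h
  have g0 := h1 0; have g1 := h1 1; have g2 := h1 2; have g3 := h1 3
  have g4 := h1 4; have g5 := h1 5; have g6 := h1 6
  rw [Fin.sum_univ_eight] at h2
  obtain ⟨b2, hb2⟩ : ∃ b2, b2 = m 7 := ⟨_, rfl⟩
  obtain ⟨a3, ha3⟩ : ∃ a, 2 * a = m 7 - m 6 := ⟨(m 7 - m 6) / 2, by omega⟩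
  obtain ⟨b3, hb3⟩ : ∃ a, 2 * a = m 6 - m 5 := ⟨(m 6 - m 5) / 2, by omega⟩
  obtain ⟨a2, ha2⟩ : ∃ a, 2 * a = m 4 - m 7 - m 6 + m 5 :=
    ⟨(m 4 - m 7 - m 6 + m 5) / 2, by omega⟩
  obtain ⟨b1, hb1⟩ : ∃ a, 2 * a = m 3 + m 7 + 2 * a2 := ⟨(m 3 + m 7 + 2 * a2) / 2, by omega⟩
  obtain ⟨b0, hb0⟩ : ∃ a, 2 * a = m 2 - m 7 := ⟨(m 2 - m 7) / 2, by omega⟩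
  obtain ⟨a0, ha0⟩ : ∃ a, 4 * a = m 0 + m 1 - 2 * b0 - 2 * b1 :=
    ⟨(m 0 + m 1 - 2 * b0 - 2 * b1) / 4, by omega⟩
  obtain ⟨a1, ha1⟩ : ∃ a, 4 * a = m 1 - m 0 - 2 * b1 + 2 * b0 - 2 * b2 :=
    ⟨(m 1 - m 0 - 2 * b1 + 2 * b0 - 2 * b2) / 4, by omega⟩
  refine ⟨![a0 + b0 * ω, a1 + b1 * ω, a2 + b2 * ω, a3 + b3 * ω], ?_⟩
  intro j
  fin_cases j <;> simp [Lc] <;> omega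

lemma Q_nonneg (x : E) : 0 ≤ Q x := by
  have := Q_L x
  have : 0 ≤ ∑ j, Lc x j ^ 2 := Finset.sum_nonneg fun j _ => sq_nonneg _
  omega

@[simp] lemma Q_zero : Q 0 = 0 := by simp [Q]

lemma Q_eq_zero {x : E} (h : Q x = 0) : x = 0 := by
  have h1 := Q_L x
  rw [h] at h1
  have h2 := (Finset.sum_eq_zero_iff_of_nonneg (s := Finset.univ) (f := fun j => Lc x j ^ 2)
    (fun j _ => sq_nonneg _)).1 (by simpa using h1.symm)
  apply L_inj
  intro j
  have := h2 j (Finset.mem_univ _)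
  have h3 : Lc x j = 0 := by simpa using this
  rw [h3]; fin_cases j <;> simp [Lc]

lemma Lc_sub (x y : E) (j) : Lc (x - y) j = Lc x j - Lc y j := by
  fin_cases j <;> simp [Lc] <;> ring
lemma Lc_int (n : ℤ) (y : E) (j) : Lc ((n : O) • y) j = n * Lc y j := by
  fin_cases j <;> simp [Lc] <;> ring

lemma coverE (x : E) (α : O) (hα : α ≠ 0) : ∃ w : E, 2 * Q (x - α • w) < nrm α ∨
    (2 * Q (x - α • w) = nrm α ∧ ∃ u : E, (2 : O) • x = α • u) := by
  have hn := nrm_pos hα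
  set n := nrm α with hnd
  obtain ⟨m, hm, hc⟩ := cover (fun j => (Lc (conj α • x) j : ℚ) / (2 * n))
  obtain ⟨w, hw⟩ := L_surj hm
  have key : conj α • (x - α • w) = conj α • x - ((n : ℤ) : O) • w := by
    rw [smul_sub, smul_smul, hnd, nrm_cast, mul_comm]
  have e1 : 8 * (n * Q (x - α • w)) = ∑ j, (Lc (conj α • x) j - n * m j) ^ 2 := by
    have : n * Q (x - α • w) = Q (conj α • (x - α • w)) := by rw [Q_smul, nrm_conj]
    rw [this, Q_L, key]
    refine Finset.sum_congr rfl fun j _ => ?_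
    rw [Lc_sub, Lc_int, hw]
  have hnq : (0 : ℚ) < n := by exact_mod_cast hn
  have e2 : ∑ j, ((Lc (conj α • x) j : ℚ) / (2 * n) - m j / 2) ^ 2
      = ((2 * Q (x - α • w) : ℤ) : ℚ) / (n : ℚ) := by
    have : ∑ j, ((Lc (conj α • x) j : ℚ) / (2 * n) - m j / 2) ^ 2
      = (∑ j, ((Lc (conj α • x) j : ℚ) - n * m j) ^ 2) / (4 * n ^ 2) := by
      rw [Finset.sum_div]
      refine Finset.sum_congr rfl fun j _ => ?_
      field_simp
      ring
    rw [this]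
    have e3 : ((8 * (n * Q (x - α • w)) : ℤ) : ℚ) = ∑ j, ((Lc (conj α • x) j : ℚ) - n * m j) ^ 2 := by
      rw [e1]; push_cast; rfl
    rw [← e3]; push_cast; field_simp; ring
  refine ⟨w, ?_⟩
  rw [e2] at hc
  rcases hc with hc | ⟨hc, m', hm', h4⟩
  · left
    rw [div_lt_one hnq] at hc
    exact_mod_cast hc
  · right
    rw [div_eq_one_iff_eq hnq.ne'] at hc
    refine ⟨by exact_mod_cast hc, ?_⟩
    obtain ⟨u, hu⟩ := L_surj hm'
    refine ⟨u, ?_⟩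
    have h5 : ((2 : ℤ) : O) • (conj α • x) = (n : O) • u := by
      apply L_inj
      intro j
      rw [Lc_int, Lc_int, hu]
      have := h4 j
      field_simp at this
      have h6 : (4 * Lc (conj α • x) j : ℤ) = 2 * (n * m' j) := by
        have : (4 * Lc (conj α • x) j : ℚ) = 2 * (n * m' j) := by linarith
        exact_mod_cast this
      omega
    have hcα : conj α ≠ 0 := fun h => hα (by simpa using congrArg conj h)
    apply smul_right_injective E hcα
    show conj α • (2 : O) • x = conj α • α • u
    rw [smul_smul (conj α) α, mul_comm (conj α) α, ← nrm_cast, ← hnd, ← h5, smul_comm]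
    push_cast; rfl

/-- Cauchy-Schwarz with a root -/
lemma csE (x y : E) (hy : Q y = 1) : nrm (κ x y) ≤ 3 * Q x := by
  have h : Q (θ • x + κ x y • y) = 3 * Q x - nrm (κ x y) := by
    apply Q_of_κ
    have h1 := κ_skew x y
    simp only [map_add, LinearMap.add_apply, map_smul, LinearMap.smul_apply,
      LinearMap.map_smulₛₗ, κ_self, smul_eq_mul, h1, hy, conj_θ]
    push_cast
    rw [nrm_cast]
    linear_combination (θ * (Q x:O) )* θ_sq
  have := Q_nonneg (θ • x + κ x y • y)
  omega

end S11

namespace S11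

section gen
variable {M : Type} [AddCommGroup M] [Module O M]

def Pres (B : M → M → O) (g : M ≃ₗ[O] M) : Prop := ∀ x y, B (g x) (g y) = B x y

lemma Pres.trans {B : M → M → O} {g h : M ≃ₗ[O] M} (hg : Pres B g) (hh : Pres B h) :
    Pres B (g.trans h) := fun x y => by simp [hh (g x) (g y), hg x y]
lemma Pres.symm {B : M → M → O} {g : M ≃ₗ[O] M} (hg : Pres B g) : Pres B g.symm :=
  fun x y => by rw [← hg]; simp
lemma Pres.refl {B : M → M → O} : Pres B (LinearEquiv.refl O M) := fun _ _ => rfl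

def unitE (M : Type) [AddCommGroup M] [Module O M] (u : O) (hu : u * conj u = 1) : M ≃ₗ[O] M where
  toFun x := u • x
  invFun x := conj u • x
  map_add' := by intros; simp
  map_smul' := fun a x => smul_comm u a x
  left_inv x := by show conj u • u • x = x; rw [smul_smul, mul_comm, hu, one_smul]
  right_inv x := by show u • conj u • x = x; rw [smul_smul, hu, one_smul]
@[simp] lemma unitE_apply (u : O) (hu) (x : M) : unitE M u hu x = u • x := rfl
end gen

lemma conj_unit {u : O} (hu : u * conj u = 1) : conj u * conj (conj u) = 1 := by
  rw [conj_conj, mul_comm, hu]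

lemma nrm_unit {u : O} (hu : u * conj u = 1) : nrm u = 1 := by
  apply int_inj; rw [nrm_cast, hu]; simp

abbrev Kp : E → E → O := fun x y => κ x y

lemma pres_unit (u : O) (hu) : Pres Kp (unitE E u hu) := by
  intro x y
  simp only [unitE_apply, map_smul, LinearMap.smul_apply, LinearMap.map_smulₛₗ, smul_eq_mul]
  linear_combination (κ x y) * hu

lemma Pres.Q {g : E ≃ₗ[O] E} (hg : Pres Kp g) (x : E) : Q (g x) = Q x := by
  apply Q_of_κ; rw [← κ_self]; exact hg x x

def trif (s : E) (hs : Q s = 1) : E ≃ₗ[O] E where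
  toFun y := y + (conj ω * κ y s) • s
  invFun y := y - (ω * κ y s) • s
  map_add' := by intros; simp only [map_add, LinearMap.add_apply]; module
  map_smul' := by intros; simp only [map_smul, LinearMap.smul_apply, RingHom.id_apply, smul_eq_mul]; module
  left_inv y := by
    simp only [map_add, map_smul, LinearMap.add_apply, LinearMap.smul_apply, κ_self, hs, smul_eq_mul]
    rw [add_sub_assoc, ← sub_smul]
    have : conj ω * κ y s - ω * (κ y s + conj ω * κ y s * (-θ * ((1:ℤ):O))) = 0 := by
      simp only [theta_eq, conj_ω]; push_cast
      linear_combination (-(κ y s) * (2 * ω - 1)) * omega_mul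
    rw [this]; simp
  right_inv y := by
    simp only [map_sub, map_smul, LinearMap.sub_apply, LinearMap.smul_apply, κ_self, hs, smul_eq_mul]
    rw [sub_add, ← sub_smul]
    have : ω * κ y s - conj ω * (κ y s - ω * κ y s * (-θ * ((1:ℤ):O))) = 0 := by
      simp only [theta_eq, conj_ω]; push_cast
      linear_combination ((κ y s) * (2 * ω - 1)) * omega_mul
    rw [this]; simp

lemma trif_apply (s : E) (hs) (y : E) : trif s hs y = y + (conj ω * κ y s) • s := rfl

lemma pres_trif (s : E) (hs) : Pres Kp (trif s hs) := by
  intro x y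
  have h1 := κ_skew y s
  simp only [trif_apply, map_add, LinearMap.add_apply, map_smul, LinearMap.smul_apply,
      LinearMap.map_smulₛₗ, κ_self, smul_eq_mul, h1, hs, map_mul, conj_conj]
  simp only [theta_eq, conj_ω]; push_cast
  linear_combination (κ x s * conj (κ y s) * (2 * ω - 1)) * omega_mul

lemma adj {r r' : E} (hr : Q r = 1) (hr' : Q r' = 1) (h : nrm (κ r r') = 1) :
    ∃ g, Pres Kp g ∧ g r = r' := by
  have hk := unit_of_nrm h
  set k := κ r r' with hkd
  have hw : ω * conj ω = 1 := by rw [conj_ω]; linear_combination - omega_mul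
  have hu : (ω * k) * conj (ω * k) = 1 := by
    rw [map_mul]; linear_combination hk * ω * conj ω + hw
  have h1 : κ r' r = - conj k := κ_skew r r'
  have hs : Q ((ω * k) • r' - r) = 1 := by
    apply Q_of_κ
    simp only [map_sub, LinearMap.sub_apply, map_smul, LinearMap.smul_apply,
      LinearMap.map_smulₛₗ, κ_self, smul_eq_mul, h1, hr, hr', map_mul, ← hkd]
    simp only [theta_eq, conj_ω] at hw ⊢; push_cast
    linear_combination (-(2 * ω - 1) * ω * (1 - ω) - (1 - ω) + ω) * hk - (2 * ω - 1) * hw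
  have h2 : κ r ((ω * k) • r' - r) = ω := by
    simp only [map_sub, LinearMap.map_smulₛₗ, κ_self, smul_eq_mul, hr, map_mul, ← hkd]
    simp only [theta_eq, conj_ω]; push_cast
    linear_combination (1 - ω) * hk
  refine ⟨(trif _ hs).trans (unitE E _ (conj_unit hu)), (pres_trif _ hs).trans (pres_unit _ _), ?_⟩
  simp only [LinearEquiv.trans_apply, trif_apply, h2, unitE_apply]
  rw [mul_comm (conj ω) ω, hw, one_smul, add_sub_cancel, smul_smul, mul_comm, hu, one_smul]

def r0 : E := ![1, 0, 0, 0]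
def r1 : E := ![0, 1, 0, 0]
def r2 : E := ![0, 0, 1, 0]
def r3 : E := ![0, 0, 0, 1]

lemma κr0 (x : E) : κ x r0 = -θ * x 0 - x 1 := by simp [κ_apply, r0]
lemma κr1 (x : E) : κ x r1 = -θ * x 1 + x 0 - x 2 := by simp [κ_apply, r1]
lemma κr2 (x : E) : κ x r2 = -θ * x 2 + x 1 - x 3 := by simp [κ_apply, r2]
lemma κr3 (x : E) : κ x r3 = -θ * x 3 + x 2 := by simp [κ_apply, r3]

lemma solve (x : E) : x 0 = κ x r3 + θ * κ x r0 - 2 * κ x r1 - θ * κ x r2 ∧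
    x 1 = -θ * x 0 - κ x r0 ∧ x 2 = -2 * x 0 + θ * κ x r0 - κ x r1 ∧
    x 3 = θ * x 0 + 2 * κ x r0 + θ * κ x r1 - κ x r2 := by
  rw [κr0, κr1, κr2, κr3]
  have h := θ_sq
  refine ⟨?_, ?_, ?_, ?_⟩
  · linear_combination (x 0 - x 2) * h
  · ring
  · linear_combination (x 0) * h
  · linear_combination (x 1) * h

lemma div_of_κ (x : E) (c : O) (h0 : c ∣ κ x r0) (h1 : c ∣ κ x r1) (h2 : c ∣ κ x r2)
    (h3 : c ∣ κ x r3) : ∃ x', x = c • x' := by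
  obtain ⟨e0, e1, e2, e3⟩ := solve x
  have d0 : c ∣ x 0 := by
    rw [e0]
    exact dvd_sub (dvd_sub (dvd_add h3 (h0.mul_left _)) (h1.mul_left _)) (h2.mul_left _)
  have d1 : c ∣ x 1 := by rw [e1]; exact dvd_sub (d0.mul_left _) h0
  have d2 : c ∣ x 2 := by rw [e2]; exact dvd_sub (dvd_add (d0.mul_left _) (h0.mul_left _)) h1
  have d3 : c ∣ x 3 := by
    rw [e3]; exact dvd_sub (dvd_add (dvd_add (d0.mul_left _) (h0.mul_left _)) (h1.mul_left _)) h2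
  obtain ⟨a, ha⟩ := d0; obtain ⟨b, hb⟩ := d1; obtain ⟨c', hc⟩ := d2; obtain ⟨d, hd⟩ := d3
  exact ⟨![a, b, c', d], eext (by simp [ha]) (by simp [hb]) (by simp [hc]) (by simp [hd])⟩

lemma Qr0 : Q r0 = 1 := by simp [Q, r0, nrm]
lemma Qr1 : Q r1 = 1 := by simp [Q, r1, nrm]
lemma Qr2 : Q r2 = 1 := by simp [Q, r2, nrm]
lemma Qr3 : Q r3 = 1 := by simp [Q, r3, nrm]

lemma root_near (l : E) : ∃ w, Q (l - θ • w) ≤ 1 := by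
  obtain ⟨w, h⟩ := coverE l θ θ_ne
  rw [nrm_θ] at h
  exact ⟨w, by rcases h with h | h <;> omega⟩

lemma res_skew (x y : E) : res (κ y x) = - res (κ x y) := by rw [κ_skew x y]; simp

lemma exists_res {y : E} (hy : Q y = 1) : ∃ x, res (κ x y) ≠ 0 := by
  by_contra! h
  have h' : ∀ x, θ ∣ κ y x := fun x => by
    obtain ⟨c, hc⟩ := dvd_of_res (a := κ y x) (by rw [res_skew, h]; simp)
    exact ⟨c, hc⟩
  obtain ⟨x', hx⟩ := div_of_κ y θ (h' _) (h' _) (h' _) (h' _)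
  have := Q_smul θ x'
  rw [← hx, hy, nrm_θ] at this
  omega

lemma nrm_skew (x y : E) : nrm (κ y x) = nrm (κ x y) := by rw [κ_skew x y]; simp

lemma root_trans {y : E} (hy : Q y = 1) : ∃ g, Pres Kp g ∧ g y = r0 := by
  obtain ⟨l, hl1, hl2⟩ : ∃ l, res (κ l y) ≠ 0 ∧ res (κ l r0) ≠ 0 := by
    have h10 : res (κ r1 r0) ≠ 0 := by rw [κr0]; simp [r1]
    by_cases h : res (κ r1 y) = 0
    · obtain ⟨x, hx⟩ := exists_res hy
      by_cases h' : res (κ x r0) = 0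
      · refine ⟨x + r1, ?_, ?_⟩
        · simpa [h] using hx
        · simpa [h'] using h10
      · exact ⟨x, hx, h'⟩
    · exact ⟨r1, h, h10⟩
  obtain ⟨w, hw⟩ := root_near l
  have hz : ∀ z, res (κ (l - θ • w) z) = res (κ l z) := by intro z; simp
  have hq : Q (l - θ • w) = 1 := by
    have := Q_nonneg (l - θ • w)
    rcases (by omega : Q (l - θ • w) = 0 ∨ Q (l - θ • w) = 1) with h | h
    · have h1 := hz y
      rw [Q_eq_zero h] at h1
      simp at h1
      exact absurd h1.symm hl1
    · exact h
  have hn : ∀ z, Q z = 1 → res (κ l z) ≠ 0 → nrm (κ (l - θ • w) z) = 1 := by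
    intro z hz1 hz2
    have h1 := csE (l - θ • w) z hz1
    have h2 := nrm_mod_of_res (a := κ (l - θ • w) z) (by rwa [hz])
    have := nrm_nonneg (κ (l - θ • w) z)
    omega
  obtain ⟨g1, hg1, e1⟩ := adj hy hq (by rw [nrm_skew]; exact hn y hy hl1)
  obtain ⟨g2, hg2, e2⟩ := adj hq Qr0 (hn r0 Qr0 hl2)
  exact ⟨g1.trans g2, hg1.trans hg2, by simp [e1, e2]⟩

lemma deep {u : E} (hu : Q u = 2) : ∃ w, Q w = 1 ∧ κ u w = θ := by
  obtain ⟨l, hl⟩ := root_near u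
  have hq : Q (u - θ • l) = 1 := by
    have := Q_nonneg (u - θ • l)
    rcases (by omega : Q (u - θ • l) = 0 ∨ Q (u - θ • l) = 1) with h | h
    · have h1 := sub_eq_zero.1 (Q_eq_zero h)
      have h2 := Q_smul θ l
      rw [← h1, hu, nrm_θ] at h2; omega
    · exact h
  obtain ⟨t, ht⟩ : ∃ t, t = u - θ • l := ⟨_, rfl⟩
  rw [← ht] at hq
  have hut : u = t + θ • l := by rw [ht]; simp
  have hres : res (κ l t) ≠ 0 := by
    have h1 := κ_self u
    rw [hu, hut] at h1
    have h2 := κ_skew l t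
    simp only [map_add, LinearMap.add_apply, map_smul, LinearMap.smul_apply,
      LinearMap.map_smulₛₗ, κ_self, smul_eq_mul, h2, hq, conj_θ] at h1
    push_cast at h1
    have h3 : κ l t + conj (κ l t) = -1 - θ * (θ * Q l) := by
      apply mul_left_cancel₀ θ_ne
      linear_combination h1
    have h4 := congrArg res h3
    simp at h4
    intro h0
    rw [h0] at h4
    revert h4; decide
  obtain ⟨g, hg, e⟩ := root_trans hq
  have hres' : res (κ (g l) r0) ≠ 0 := by rw [← e]; have := hg l t; simp only [Kp] at this; rwa [this]
  obtain ⟨w, hw1, hw2, hw3⟩ : ∃ w, Q w = 1 ∧ κ r0 w = 0 ∧ res (κ (g l) w) ≠ 0 := by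
    by_cases h : res (κ (g l) r2) = 0
    · refine ⟨r0 - θ • r1 - r2, ?_, ?_, ?_⟩
      · simp [Q, r0, r1, r2, nrm]
      · simp only [map_sub, LinearMap.map_smulₛₗ, κr0, κr1, κr2, conj_θ]
        simp [r0]
      · simp only [map_sub, LinearMap.map_smulₛₗ, h]
        simpa using hres'
    · exact ⟨r2, Qr2, by rw [κr2]; simp [r0], h⟩
  have hgu : g u = r0 + θ • g l := by rw [hut]; simp [e]
  have hk : κ (g u) w = θ * κ (g l) w := by rw [hgu]; simp [hw2]
  have hn : nrm (κ (g l) w) = 1 := by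
    have h1 := csE (g u) w hw1
    rw [hg.Q, hu, hk, nrm_mul, nrm_θ] at h1
    have h2 := nrm_mod_of_res hw3
    have := nrm_nonneg (κ (g l) w)
    omega
  refine ⟨g.symm (κ (g l) w • w), ?_, ?_⟩
  · rw [hg.symm.Q, Q_smul, hn, hw1]; rfl
  · have := hg u (g.symm (κ (g l) w • w))
    simp only [Kp] at this
    rw [← this, LinearEquiv.apply_symm_apply, LinearMap.map_smulₛₗ, hk, smul_eq_mul]
    linear_combination θ * unit_of_nrm hn

end S11

namespace S11

abbrev P := (E × E) × (O × O)

def Kf (v w : P) : O :=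
  κ v.1.1 w.1.1 + κ v.1.2 w.1.2 + v.2.1 * conj w.2.2 - v.2.2 * conj w.2.1

def K : P →ₗ[O] P →ₛₗ[conj] O :=
  LinearMap.mk₂'ₛₗ (RingHom.id O) conj Kf
    (by intros; simp [Kf]; ring) (by intros; simp [Kf]; ring)
    (by intros; simp [Kf]; ring) (by intros; simp [Kf]; ring)

lemma K_apply (v w : P) : K v w =
  κ v.1.1 w.1.1 + κ v.1.2 w.1.2 + v.2.1 * conj w.2.2 - v.2.2 * conj w.2.1 := rfl

lemma K_skew (x y : P) : K y x = - conj (K x y) := by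
  simp only [K_apply, κ_skew x.1.1, κ_skew x.1.2, map_add, map_sub, map_mul, conj_conj]; ring

def N (v : P) : ℤ := Q v.1.1 + Q v.1.2 - ci (v.2.1 * conj v.2.2)

lemma sub_conj (a : O) : a - conj a = θ * (ci a : O) := by
  apply oext <;> simp <;> ring

lemma K_self (v : P) : K v v = -θ * (N v : O) := by
  have := sub_conj (v.2.1 * conj v.2.2)
  rw [map_mul, conj_conj] at this
  simp only [K_apply, κ_self, N]; push_cast
  linear_combination this

lemma N_of_K {x : P} {n : ℤ} (h : K x x = -θ * (n : O)) : N x = n := by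
  rw [K_self] at h
  exact int_inj (mul_left_cancel₀ (neg_ne_zero.2 θ_ne) h)

abbrev KP : P → P → O := fun x y => K x y

lemma Pres.N {g : P ≃ₗ[O] P} (hg : Pres KP g) (x : P) : N (g x) = N x := by
  apply N_of_K; rw [← K_self]; exact hg x x

def Tf (w1 w2 : E) (s : ℤ) (v : P) : P :=
  ((v.1.1 + v.2.2 • w1, v.1.2 + v.2.2 • w2),
   (v.2.1 + v.2.2 * (s + (Q w1 + Q w2 : ℤ) * ω) - κ v.1.1 w1 - κ v.1.2 w2, v.2.2))

lemma Q_neg (w : E) : Q (-w) = Q w := by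
  apply Q_of_κ; simp [κ_self]

lemma Tf_inv (w1 w2 : E) (s s' : ℤ) (hs : s + s' = -(Q w1 + Q w2)) (v : P) :
    Tf (-w1) (-w2) s' (Tf w1 w2 s v) = v := by
  obtain ⟨⟨x1, x2⟩, p, q⟩ := v
  obtain rfl : s' = -(Q w1 + Q w2) - s := by omega
  simp only [Tf, Q_neg, smul_neg, add_neg_cancel_right, map_neg, map_add, LinearMap.add_apply,
    map_smul, LinearMap.smul_apply, κ_self, smul_eq_mul, Prod.mk.injEq, true_and, and_true]
  rw [theta_eq]; push_cast; ring

def T (w1 w2 : E) (s : ℤ) : P ≃ₗ[O] P where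
  toFun := Tf w1 w2 s
  invFun := Tf (-w1) (-w2) (-s - (Q w1 + Q w2))
  map_add' x y := by
    simp only [Tf, Prod.fst_add, Prod.snd_add, map_add, LinearMap.add_apply, Prod.mk_add_mk,
      Prod.mk.injEq]
    refine ⟨⟨?_, ?_⟩, ?_, trivial⟩
    · module
    · module
    · ring
  map_smul' a x := by
    simp only [Tf, Prod.smul_fst, Prod.smul_snd, map_smul, LinearMap.smul_apply, Prod.smul_mk,
      Prod.mk.injEq, RingHom.id_apply, smul_eq_mul]
    refine ⟨⟨?_, ?_⟩, ?_, trivial⟩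
    · module
    · module
    · ring
  left_inv v := Tf_inv _ _ _ _ (by ring) v
  right_inv v := by
    have := Tf_inv (-w1) (-w2) (-s - (Q w1 + Q w2)) s (by rw [Q_neg, Q_neg]; ring) v
    simpa using this

lemma T_mk (w1 w2 : E) (s : ℤ) (x1 x2 : E) (p q : O) : T w1 w2 s ((x1, x2), (p, q)) =
   ((x1 + q • w1, x2 + q • w2),
   (p + q * (s + (Q w1 + Q w2 : ℤ) * ω) - κ x1 w1 - κ x2 w2, q)) := rfl

lemma pres_T (w1 w2 : E) (s : ℤ) : Pres KP (T w1 w2 s) := by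
  rintro ⟨⟨x1, x2⟩, p, q⟩ ⟨⟨y1, y2⟩, p', q'⟩
  simp only [KP, T_mk, K_apply, map_add, map_sub, LinearMap.add_apply, map_smul,
    LinearMap.smul_apply, LinearMap.map_smulₛₗ, κ_self, smul_eq_mul, κ_skew y1 w1, κ_skew y2 w2,
    map_mul, map_intCast, conj_ω]
  rw [theta_eq]; push_cast; ring

def swp : P ≃ₗ[O] P where
  toFun v := (v.1, (-v.2.2, v.2.1))
  invFun v := (v.1, (v.2.2, -v.2.1))
  map_add' x y := by simp [add_comm]
  map_smul' a x := by simp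
  left_inv v := by simp
  right_inv v := by simp
lemma swp_mk (x : E × E) (p q : O) : swp (x, (p, q)) = (x, (-q, p)) := rfl
lemma pres_swp : Pres KP swp := by
  rintro ⟨⟨x1, x2⟩, p, q⟩ ⟨⟨y1, y2⟩, p', q'⟩
  simp only [KP, swp_mk, K_apply, map_neg]; ring

def scl (u : O) (hu : u * conj u = 1) : P ≃ₗ[O] P :=
  (LinearEquiv.refl O (E × E)).prodCongr (unitE (O × O) u hu)
lemma scl_mk (u : O) (hu) (x : E × E) (p q : O) : scl u hu (x, (p, q)) = (x, (u * p, u * q)) := rfl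
lemma pres_scl (u : O) (hu) : Pres KP (scl u hu) := by
  rintro ⟨⟨x1, x2⟩, p, q⟩ ⟨⟨y1, y2⟩, p', q'⟩
  simp only [KP, scl_mk, K_apply, map_mul]
  linear_combination (p * conj q' - q * conj p') * hu

def eis (g : E ≃ₗ[O] E) : P ≃ₗ[O] P :=
  (g.prodCongr (LinearEquiv.refl O E)).prodCongr (LinearEquiv.refl O (O × O))
lemma eis_mk (g) (x1 x2 : E) (p q : O) : eis g ((x1, x2), (p, q)) = ((g x1, x2), (p, q)) := rfl
lemma pres_eis {g : E ≃ₗ[O] E} (hg : Pres Kp g) : Pres KP (eis g) := by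
  rintro ⟨⟨x1, x2⟩, p, q⟩ ⟨⟨y1, y2⟩, p', q'⟩
  have : κ (g x1) (g y1) = κ x1 y1 := hg x1 y1
  simp only [KP, eis_mk, K_apply, this]

def fsw : P ≃ₗ[O] P :=
  (LinearEquiv.prodComm O E E).prodCongr (LinearEquiv.refl O (O × O))
lemma fsw_mk (x1 x2 : E) (p q : O) : fsw ((x1, x2), (p, q)) = ((x2, x1), (p, q)) := rfl
lemma pres_fsw : Pres KP fsw := by
  rintro ⟨⟨x1, x2⟩, p, q⟩ ⟨⟨y1, y2⟩, p', q'⟩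
  simp only [KP, fsw_mk, K_apply]; ring

/-! null descent -/

lemma step (x1 x2 : E) (p q : O) (hq : q ≠ 0) (h0 : N ((x1, x2), (p, q)) = 0) :
    ∃ g, Pres KP g ∧ nrm (g ((x1, x2), (p, q))).2.2 < nrm q := by
  obtain ⟨w1, h1⟩ := coverE x1 q hq
  obtain ⟨w2, h2⟩ := coverE x2 q hq
  have hn := nrm_pos hq
  obtain ⟨y1, hy1⟩ : ∃ y1, y1 = x1 - q • w1 := ⟨_, rfl⟩
  obtain ⟨y2, hy2⟩ : ∃ y2, y2 = x2 - q • w2 := ⟨_, rfl⟩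
  rw [← hy1] at h1
  rw [← hy2] at h2
  obtain ⟨p1, hp1⟩ : ∃ p1, T (-w1) (-w2) 0 ((x1, x2), (p, q)) = ((y1, y2), (p1, q)) := by
    rw [T_mk]; exact ⟨_, by rw [hy1, hy2, smul_neg, smul_neg, sub_eq_add_neg x1, sub_eq_add_neg x2]⟩
  have hN1 : N ((y1, y2), (p1, q)) = 0 := by rw [← hp1, (pres_T _ _ _).N, h0]
  simp only [N] at hN1
  set n := nrm q with hnd
  obtain ⟨d, hd⟩ : ∃ d, d = ci (p1 * conj q) := ⟨_, rfl⟩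
  obtain ⟨c, hc⟩ : ∃ c, c = cr (p1 * conj q) := ⟨_, rfl⟩
  rw [← hd] at hN1
  obtain ⟨s, hs⟩ : ∃ s, s = -((2 * c + d + n - 1) / (2 * n)) := ⟨_, rfl⟩
  have hs1 : 1 - n ≤ 2 * (c + n * s) + d ∧ 2 * (c + n * s) + d ≤ n := by
    have e1 := Int.emod_add_mul_ediv (2 * c + d + n - 1) (2 * n)
    have e2 := Int.emod_nonneg (2 * c + d + n - 1) (by omega : 2 * n ≠ 0)
    have e3 := Int.emod_lt_of_pos (2 * c + d + n - 1) (by omega : 0 < 2 * n)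
    have e4 : 2 * n * ((2 * c + d + n - 1) / (2 * n)) = - (2 * (n * s)) := by rw [hs]; ring
    rw [e4] at e1
    constructor <;> omega
  clear hs
  have hT2 : T 0 0 s ((y1, y2), (p1, q)) = ((y1, y2), (p1 + q * s, q)) := by
    rw [T_mk]; simp
  obtain ⟨p2, hp2⟩ : ∃ p2, p2 = p1 + q * s := ⟨_, rfl⟩
  rw [← hp2] at hT2
  obtain ⟨c2, hc2⟩ : ∃ c2, c2 = c + n * s := ⟨_, rfl⟩
  rw [← hc2] at hs1
  have hγ : p2 * conj q = c2 + d * ω := by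
    have e1 := eq_rep (p1 * conj q)
    rw [← hc, ← hd] at e1
    have e2 := nrm_cast q
    rw [← hnd] at e2
    rw [hp2, hc2]; push_cast
    linear_combination e1 - s * e2
  have hnγ : nrm p2 * n = c2 ^ 2 + c2 * d + d ^ 2 := by
    have : nrm (p2 * conj q) = nrm p2 * n := by rw [nrm_mul, nrm_conj]
    rw [← this, hγ]; simp [nrm]
  have hq1 := Q_nonneg y1
  have hq2 := Q_nonneg y2
  have hd0 : 0 ≤ d := by omega
  have hdn : d ≤ n := by
    have : 2 * Q y1 ≤ n := by rcases h1 with h | h <;> omega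
    have : 2 * Q y2 ≤ n := by rcases h2 with h | h <;> omega
    omega
  by_cases hlt : nrm p2 < n
  · refine ⟨((T (-w1) (-w2) 0).trans (T 0 0 s)).trans swp,
      ((pres_T _ _ _).trans (pres_T _ _ _)).trans pres_swp, ?_⟩
    simp only [LinearEquiv.trans_apply, hp1, hT2, swp_mk]
    exact hlt
  have hA : (2 * c2 + d) ^ 2 + 3 * d ^ 2 = 4 * (nrm p2 * n) := by rw [hnγ]; ring
  have hB : (2 * c2 + d) ^ 2 ≤ n ^ 2 := by
    apply sq_le_sq'; omega; omega
  have hC : d ^ 2 ≤ n ^ 2 := by apply sq_le_sq'; omega; omega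
  have hD : n ^ 2 ≤ nrm p2 * n := by nlinarith
  have hdn' : d = n := by nlinarith
  have hc0 : c2 = 0 := by
    have : (2 * c2 + d) ^ 2 = n ^ 2 := by nlinarith
    rcases sq_eq_sq_iff_eq_or_eq_neg.1 this with h | h <;> omega
  have h2Q : 2 * Q y1 = n := by
    rcases h1 with h | h <;> rcases h2 with h' | h' <;> omega
  obtain ⟨u, hu⟩ : ∃ u : E, (2 : O) • y1 = q • u := by
    rcases h1 with h | ⟨_, u, hu⟩
    · omega
    · refine ⟨u - (2 : O) • w1, ?_⟩
      rw [hy1, smul_sub, hu, smul_sub, smul_comm]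
  have hQu : Q u = 2 := by
    have e := congrArg Q hu
    rw [Q_smul, Q_smul, ← hnd] at e
    have : nrm (2 : O) = 4 := by simp [nrm]
    rw [this] at e
    have e' : n * Q u = n * 2 := by linarith
    exact mul_left_cancel₀ hn.ne' e'
  obtain ⟨w, hw1, hw2⟩ := deep hQu
  have hκ : 2 * κ y1 w = q * θ := by
    have := congrArg (fun z => κ z w) hu
    simpa [hw2] using this
  obtain ⟨p3, hp3⟩ : ∃ p3, p3 = p2 + q * (((-1 : ℤ) : O) + (Q w + Q 0 : ℤ) * ω) - κ y1 w - κ y2 0 := ⟨_, rfl⟩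
  have hp3' : 2 * (p3 * conj q) = n * θ := by
    have e2 := nrm_cast q
    rw [← hnd] at e2
    rw [hp3, hw1, Q_zero, map_zero]; push_cast
    rw [hc0, hdn'] at hγ
    push_cast at hγ
    rw [theta_eq] at hκ ⊢
    linear_combination 2 * hγ - conj q * hκ - (2 * (ω - 1) - (2 * ω - 1)) * e2
  have h4 : 4 * nrm p3 = 3 * n := by
    have e := congrArg nrm hp3'
    rw [nrm_mul, nrm_mul, nrm_mul, nrm_conj, nrm_θ, nrm_int, ← hnd] at e
    have : nrm (2 : O) = 4 := by simp [nrm]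
    rw [this] at e
    apply mul_left_cancel₀ hn.ne'
    linarith
  refine ⟨(((T (-w1) (-w2) 0).trans (T 0 0 s)).trans (T w 0 (-1))).trans swp,
      (((pres_T _ _ _).trans (pres_T _ _ _)).trans (pres_T _ _ _)).trans pres_swp, ?_⟩
  simp only [LinearEquiv.trans_apply, hp1, hT2, T_mk, swp_mk]
  rw [← hp3]
  omega

lemma null_norm (n : ℕ) : ∀ v : P, v ≠ 0 → N v = 0 → nrm v.2.2 < n →
    ∃ g, Pres KP g ∧ ∃ p, p ≠ 0 ∧ g v = ((0, 0), (p, 0)) := by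
  induction n with
  | zero => intro v _ _ h; have := nrm_nonneg v.2.2; push_cast at h; omega
  | succ n ih =>
    rintro ⟨⟨x1, x2⟩, p, q⟩ hv h0 hn
    by_cases hq : q = 0
    · subst hq
      have h1 := Q_nonneg x1
      have h2 := Q_nonneg x2
      have h0' := h0
      simp [N] at h0'
      have e1 := Q_eq_zero (x := x1) (by omega)
      have e2 := Q_eq_zero (x := x2) (by omega)
      subst e1; subst e2
      refine ⟨LinearEquiv.refl O P, Pres.refl, p, ?_, rfl⟩
      rintro rfl; exact hv rfl
    · obtain ⟨g, hg, hlt⟩ := step x1 x2 p q hq h0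
      obtain ⟨g', hg', p', hp', e⟩ := ih (g ((x1, x2), (p, q))) (by simpa using hv)
        (by rw [hg.N, h0]) (by push_cast at hn; omega)
      exact ⟨g.trans g', hg.trans hg', p', hp', by simpa using e⟩

lemma null_std {v : P} (hv : v ≠ 0) (h0 : N v = 0) :
    ∃ g, Pres KP g ∧ ∃ p, p ≠ 0 ∧ g v = ((0, 0), (p, 0)) :=
  null_norm (nrm v.2.2 + 1).toNat v hv h0 (by have := nrm_nonneg v.2.2; omega)

end S11

namespace S11

lemma N_zero_iff {v : P} : N v = 0 ↔ K v v = 0 := by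
  constructor
  · intro h; rw [K_self, h]; simp
  · intro h; apply N_of_K; rw [h]; simp

lemma K_zero_symm {v w : P} (h : K v w = 0) : K w v = 0 := by rw [K_skew v w, h]; simp

lemma witt {a b c e : P} (hab : K a a = K b b) (hac : K a c = K b c) (he : e ≠ 0)
    (hee : K e e = 0) (hea : K e a = 0) (hec : K e c = 0) :
    ∃ e', e' ≠ 0 ∧ K e' e' = 0 ∧ K e' b = 0 ∧ K e' c = 0 := by
  obtain ⟨s, hs⟩ : ∃ s, s = b - a := ⟨_, rfl⟩
  have hsc : K s c = 0 := by rw [hs]; simp [hac]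
  have hba := K_skew a b
  have hsb : K s b = K b b - K a b := by rw [hs]; simp
  have hsa : K s a = K b a - K b b := by rw [hs]; simp [hab]
  have hss : K s s = K s b - K s a := by nth_rewrite 2 [hs]; simp
  have hes : K e s = K e b := by rw [hs]; simp [hea]
  have hse := K_skew e s
  have hconj : conj (K s b) = K s a := by
    rw [hsb, hsa, map_sub, hba]
    have := K_skew b b
    linear_combination this
  by_cases hD : K s b = 0
  · have hsa0 : K s a = 0 := by rw [← hconj, hD]; simp
    by_cases h0 : s = 0
    · have : b = a := sub_eq_zero.1 (by rw [← hs, h0])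
      exact ⟨e, he, hee, by rw [this, hea], hec⟩
    · exact ⟨s, h0, by rw [hss, hD, hsa0]; simp, hD, hsc⟩
  · refine ⟨(-K s b) • e + (K e s) • s, ?_, ?_, ?_, ?_⟩
    · intro h
      have h1 : K e s * K s a = 0 := by
        have := congrArg (fun z => K z a) h
        simpa only [map_add, LinearMap.add_apply, map_smul, LinearMap.smul_apply, smul_eq_mul, hea,
          mul_zero, zero_add, map_zero, LinearMap.zero_apply] using this
      have hsa0 : K s a ≠ 0 := by
        rw [← hconj]; intro h'; exact hD (by simpa using congrArg conj h')
      have h2 : K e s = 0 := (mul_eq_zero.1 h1).resolve_right hsa0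
      rw [h2, zero_smul, add_zero] at h
      rcases smul_eq_zero.1 h with h | h
      · exact hD (by simpa using h)
      · exact he h
    · simp only [map_add, LinearMap.add_apply, map_smul, LinearMap.smul_apply,
        LinearMap.map_smulₛₗ, smul_eq_mul, hee, hse, hss, map_neg, hconj]
      ring
    · simp only [map_add, LinearMap.add_apply, map_smul, LinearMap.smul_apply, smul_eq_mul, hes]
      ring
    · simp [hec, hsc]

def R1 : P := ((r0, 0), (0, 0))

lemma N_R1 : N R1 = 1 := by simp [N, R1, Qr0]

lemma K_R1 (v : P) : K v R1 = κ v.1.1 r0 := by simp [K_apply, R1]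

lemma root_nf (y1 y2 : E) (β : O) (h : N ((y1, y2), (β, 0)) = 1) :
    ∃ g, Pres KP g ∧ g ((y1, y2), (β, 0)) = R1 ∧ ∀ v : P, v.2.2 = 0 → (g v).2.2 = 0 := by
  have main : ∀ y1 : E, Q y1 = 1 → ∃ g, Pres KP g ∧ g ((y1, 0), (β, 0)) = R1 ∧
      ∀ v : P, v.2.2 = 0 → (g v).2.2 = 0 := by
    intro y1 h1
    obtain ⟨g, hg, e⟩ := root_trans h1
    refine ⟨(eis g).trans (T (conj β • r1) 0 0), (pres_eis hg).trans (pres_T _ _ _), ?_, ?_⟩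
    · have h2 : κ r0 r1 = 1 := by rw [κr1]; simp [r0]
      simp only [LinearEquiv.trans_apply, eis_mk, T_mk, e, LinearMap.map_smulₛₗ, h2, conj_conj]
      simp [R1]
    · rintro ⟨⟨x1, x2⟩, p, q⟩ hv
      simpa only [LinearEquiv.trans_apply, eis_mk, T_mk] using hv
  have q1 := Q_nonneg y1
  have q2 := Q_nonneg y2
  have h' : Q y1 + Q y2 = 1 := by simpa [N] using h
  rcases (by omega : Q y2 = 0 ∨ Q y1 = 0) with h2 | h2
  · obtain rfl := Q_eq_zero h2
    exact main y1 (by omega)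
  · obtain rfl := Q_eq_zero h2
    obtain ⟨g, hg, e, hv⟩ := main y2 (by omega)
    refine ⟨fsw.trans g, pres_fsw.trans hg, ?_, ?_⟩
    · simpa only [LinearEquiv.trans_apply, fsw_mk] using e
    · rintro ⟨⟨x1, x2⟩, p, q⟩ h
      simp only [LinearEquiv.trans_apply, fsw_mk]
      exact hv _ h

lemma perp_q {e v : P} {g : P ≃ₗ[O] P} (hg : Pres KP g) {p : O} (hp : p ≠ 0)
    (he : g e = ((0, 0), (p, 0))) (h : K e v = 0) : (g v).2.2 = 0 := by
  have h1 : K (g e) (g v) = 0 := by rw [← h]; exact hg e v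
  rw [he, K_apply] at h1
  simp [hp] at h1
  simpa using congrArg conj h1

/-- pairs orthogonal to a null vector can be put in `q = 0` position with second one `R1` -/
lemma pair_nf {e z r : P} (he : e ≠ 0) (hee : K e e = 0) (hez : K e z = 0) (her : K e r = 0)
    (hr : N r = 1) : ∃ g, Pres KP g ∧ g r = R1 ∧ (g z).2.2 = 0 := by
  obtain ⟨g, hg, p, hp, h1⟩ := null_std he (N_zero_iff.2 hee)
  have hq := perp_q hg hp h1 her
  have hz := perp_q hg hp h1 hez
  rcases hgr : g r with ⟨⟨y1, y2⟩, β, q⟩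
  rw [hgr] at hq
  simp only at hq
  subst hq
  obtain ⟨g', hg', e', hv⟩ := root_nf y1 y2 β (by rw [← hgr, hg.N, hr])
  exact ⟨g.trans g', hg.trans hg', by simp [hgr, e'], by simpa using hv _ hz⟩

def e0 : P := ((0, 0), (1, 0))
lemma e0_ne : e0 ≠ 0 := by intro h; have := congrArg (fun v : P => v.2.1) h; simp [e0] at this
lemma K_e0 (v : P) : K e0 v = conj v.2.2 := by simp [K_apply, e0]

lemma flowA {r : P} (hr : N r = 1) : ∃ g, Pres KP g ∧ g r = R1 := by
  obtain ⟨e, he, hee, her, -⟩ := witt (a := R1) (b := r) (c := 0) (e := e0)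
    (by rw [K_self, K_self, hr, N_R1]) (by simp) e0_ne (by rw [K_e0]; simp [e0])
    (by rw [K_e0]; simp [R1]) (by simp)
  obtain ⟨g, hg, h, -⟩ := pair_nf he hee her her hr
  exact ⟨g, hg, h⟩

lemma flowB {z : P} {a : O} (hz : N z = 2) (hza : K z R1 = a)
    (ha : a = 0 ∨ a = 1 ∨ a = θ ∨ a = 2) :
    ∃ g, Pres KP g ∧ g R1 = R1 ∧ (g z).2.2 = 0 := by
  obtain ⟨z0, h1, h2, h3⟩ : ∃ z0 : P, N z0 = 2 ∧ K z0 R1 = a ∧ z0.2.2 = 0 := by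
    rcases ha with rfl | rfl | rfl | rfl
    · exact ⟨((r2, r0), (0, 0)), by simp [N, Qr2, Qr0], by rw [K_R1, κr0]; simp [r2], rfl⟩
    · exact ⟨((-r1, r0), (0, 0)), by simp [N, Q_neg, Qr1, Qr0], by rw [K_R1, κr0]; simp [r1], rfl⟩
    · exact ⟨((-r0, r0), (0, 0)), by simp [N, Q_neg, Qr0], by rw [K_R1, κr0]; simp [r0], rfl⟩
    · refine ⟨((![θ, 1, 0, 0], 0), (0, 0)), by simp [N, Q, nrm], ?_, rfl⟩
      rw [K_R1, κr0]; simp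
      linear_combination -θ_sq
  obtain ⟨e, he, hee, hez, her⟩ := witt (a := z0) (b := z) (c := R1) (e := e0)
    (by rw [K_self, K_self, hz, h1]) (by rw [h2, hza]) e0_ne (by rw [K_e0]; simp [e0])
    (by rw [K_e0, h3]; simp) (by rw [K_e0]; simp [R1])
  exact pair_nf he hee hez her N_R1

def Hyp (z r : P) : Prop := ∀ (k : O) (y : P), z - k • r ≠ θ • y

lemma Hyp.map {z r : P} (h : Hyp z r) (g : P ≃ₗ[O] P) : Hyp (g z) (g r) := by
  intro k y e
  apply h k (g.symm y)
  apply g.injective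
  simpa using e

def perpI (x1 x2 : E) : Ideal O where
  carrier := {t | ∃ w1 w2 : E, κ r0 w1 = 0 ∧ κ x1 w1 + κ x2 w2 = t}
  add_mem' := by
    rintro _ _ ⟨w1, w2, h, rfl⟩ ⟨w1', w2', h', rfl⟩
    exact ⟨w1 + w1', w2 + w2', by simp [h, h'], by simp only [map_add]; ring⟩
  zero_mem' := ⟨0, 0, by simp, by simp⟩
  smul_mem' := by
    rintro c _ ⟨w1, w2, h, rfl⟩
    exact ⟨conj c • w1, conj c • w2, by simp [h], by simp [mul_add]⟩

lemma final_step (x1 x2 : E) (ε a : O) (hε : ε * conj ε = 1)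
    (hz : N ((x1, x2), (ε, 0)) = 2) (hza : κ x1 r0 = a) :
    ∃ g, Pres KP g ∧ g R1 = R1 ∧
      g ((x1, x2), (ε, 0)) = (((-a) • r1, 0), (((nrm a - 2 : ℤ) : O) * ω, 1)) := by
  have hw : κ r0 ((-a) • r1 - x1) = 0 := by
    rw [κ_skew ((-a) • r1 - x1) r0]
    have : κ r1 r0 = -1 := by rw [κr0]; simp [r1]
    simp [this, hza]
  obtain ⟨g1, hg1d⟩ : ∃ g1, g1 = (swp.trans (scl _ (conj_unit hε))).trans
    (T ((-a) • r1 - x1) (-x2) 0) := ⟨_, rfl⟩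
  have hg1 : Pres KP g1 := by
    rw [hg1d]; exact (pres_swp.trans (pres_scl _ _)).trans (pres_T _ _ _)
  have hR : g1 R1 = R1 := by
    simp only [hg1d, LinearEquiv.trans_apply, R1, swp_mk, scl_mk, T_mk, hw]
    simp
  obtain ⟨p, hp⟩ : ∃ p, g1 ((x1, x2), (ε, 0)) = (((-a) • r1, 0), (p, 1)) := by
    simp only [hg1d, LinearEquiv.trans_apply, R1, swp_mk, scl_mk, T_mk]
    rw [mul_comm (conj ε) ε, hε, one_smul, one_smul, add_sub_cancel, add_neg_cancel]
    exact ⟨_, rfl⟩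
  have hN : N (((-a) • r1, 0), (p, 1)) = 2 := by rw [← hp, hg1.N, hz]
  simp only [N, Q_smul, nrm_neg, Qr1, Q_zero, map_one, mul_one] at hN
  refine ⟨g1.trans (T 0 0 (-cr p)), hg1.trans (pres_T _ _ _), ?_, ?_⟩
  · rw [LinearEquiv.trans_apply, hR, R1, T_mk]; simp
  · rw [LinearEquiv.trans_apply, hp, T_mk]
    have h1 : nrm a - 2 = ci p := by omega
    have h2 := eq_rep p
    rw [h1]
    simp only [smul_zero, add_zero, Q_zero, map_zero, sub_zero, Prod.mk.injEq, true_and, and_true]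
    push_cast
    linear_combination h2

lemma flowC (x1 x2 : E) (β a : O) (hz : N ((x1, x2), (β, 0)) = 2) (hza : κ x1 r0 = a)
    (ha : nrm a = 0 ∨ nrm a = 1 ∨ nrm a = 3 ∨ nrm a = 4) (hyp : Hyp ((x1, x2), (β, 0)) R1) :
    ∃ g, Pres KP g ∧ g R1 = R1 ∧
      g ((x1, x2), (β, 0)) = (((-a) • r1, 0), (((nrm a - 2 : ℤ) : O) * ω, 1)) := by
  -- it suffices to find `w` making the `p`-coordinate a unit
  suffices H : ∃ w1 w2 : E, κ r0 w1 = 0 ∧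
      ∃ ε : O, ε * conj ε = 1 ∧ β - (κ x1 w1 + κ x2 w2) = ε by
    obtain ⟨w1, w2, h0, ε, hε, h⟩ := H
    have e1 : T w1 w2 0 ((x1, x2), (β, 0)) = ((x1, x2), (ε, 0)) := by
      rw [T_mk, ← h]; simp; ring
    have e2 : T w1 w2 0 R1 = R1 := by rw [R1, T_mk, h0]; simp
    obtain ⟨g, hg, h1, h2⟩ := final_step x1 x2 ε a hε (by rw [← e1, (pres_T _ _ _).N, hz]) hza
    exact ⟨(T w1 w2 0).trans g, (pres_T _ _ _).trans hg, by simp [e2, h1], by simp [e1, h2]⟩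
  obtain ⟨c, hc⟩ := principal (perpI x1 x2)
  have hdvd : ∀ w1 w2 : E, κ r0 w1 = 0 → c ∣ κ x1 w1 + κ x2 w2 := by
    intro w1 w2 h
    rw [← Ideal.mem_span_singleton, ← hc]
    exact ⟨w1, w2, h, rfl⟩
  have hmem : ∀ t, c ∣ t → ∃ w1 w2 : E, κ r0 w1 = 0 ∧ κ x1 w1 + κ x2 w2 = t := by
    intro t ht
    rw [← Ideal.mem_span_singleton, ← hc] at ht
    exact ht
  have h01 : κ r0 r1 = 1 := by rw [κr1]; simp [r0]
  have h02 : κ r0 r2 = 0 := by rw [κr2]; simp [r0]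
  have h03 : κ r0 r3 = 0 := by rw [κr3]; simp [r0]
  have h00 : κ r0 r0 = -θ := by rw [κ_self, Qr0]; simp
  have hd2 : ∀ w, c ∣ κ x2 w := fun w => by simpa using hdvd 0 w (by simp)
  obtain ⟨x2', hx2⟩ := div_of_κ x2 c (hd2 _) (hd2 _) (hd2 _) (hd2 _)
  obtain ⟨k, hk⟩ : ∃ k, k = κ x1 r1 := ⟨_, rfl⟩
  obtain ⟨x1', hx1⟩ : ∃ x1', x1 - k • r0 = c • x1' := by
    apply div_of_κ
    · have := hdvd (r0 - θ • r1) 0 (by simp [h00, h01])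
      simpa [h00, ← hk, mul_comm] using this
    · simp [h01, hk]
    · simpa [h02] using hdvd r2 0 h02
    · simpa [h03] using hdvd r3 0 h03
  have hx1' : x1 = c • x1' + k • r0 := by rw [← hx1]; simp
  obtain ⟨bb, hbb⟩ : ∃ bb, bb = κ x1' r0 := ⟨_, rfl⟩
  have hN : Q x1 + Q x2 = 2 := by simpa [N] using hz
  have hrel : 6 - nrm a = nrm c * (3 * (Q x1' + Q x2') - nrm bb) := by
    have e1 : a = c * bb - θ * k := by
      rw [← hza, hx1', hbb]; simp [h00]; ring
    have e2 := κ_self x1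
    rw [hx1'] at e2
    simp only [map_add, LinearMap.add_apply, map_smul, LinearMap.smul_apply,
        LinearMap.map_smulₛₗ, smul_eq_mul, κ_skew x1' r0, κ_self, Qr0, ← hbb] at e2
    rw [← hx1'] at e2
    have e3 : Q x2 = nrm c * Q x2' := by rw [hx2, Q_smul]
    have e4 : Q x1 = 2 - nrm c * Q x2' := by omega
    rw [e4] at e2
    apply int_inj
    push_cast at e2 ⊢
    rw [nrm_cast, nrm_cast, nrm_cast] at *
    rw [e1]
    simp only [map_sub, map_mul, conj_θ]
    linear_combination (-θ) * e2 - (c * conj c * (Q x1' : O) + c * conj c * (Q x2' : O) - 2) * θ_sq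
  have hcn : nrm c = 1 ∨ nrm c = 3 := by
    have hd : nrm c ∣ 6 - nrm a := ⟨_, hrel⟩
    have h0 := nrm_nonneg c
    obtain ⟨s2, s5, s6⟩ := small_nrm c
    have hle : nrm c ≤ 6 - nrm a := Int.le_of_dvd (by omega) hd
    clear hrel
    generalize nrm c = n at *
    generalize nrm a = m at *
    obtain ⟨t, ht⟩ := hd
    have hn : n = 0 ∨ n = 1 ∨ n = 3 ∨ n = 4 := by omega
    rcases hn with rfl | rfl | rfl | rfl <;> omega
  rcases hcn with h | h
  · have hu := unit_of_nrm h
    obtain ⟨w1, w2, hw, e⟩ := hmem (β - 1) ⟨conj c * (β - 1), by linear_combination -(β - 1) * hu⟩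
    exact ⟨w1, w2, hw, 1, by simp, by rw [e]; ring⟩
  · have hrc : res c = 0 := by
      by_contra h'
      have := nrm_mod_of_res h'
      omega
    obtain ⟨c', hc'⟩ := dvd_of_res hrc
    have hc1 : nrm c' = 1 := by
      rw [hc', nrm_mul, nrm_θ] at h; omega
    have hu := unit_of_nrm hc1
    have hθ : ∀ t, res t = 0 → c ∣ t := by
      intro t ht
      obtain ⟨t', rfl⟩ := dvd_of_res ht
      exact ⟨conj c' * t', by rw [hc']; linear_combination -(θ * t') * hu⟩
    have h3 : ∀ t : ZMod 3, t = 0 ∨ t = 1 ∨ t = -1 := by decide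
    rcases h3 (res β) with hβ | hβ | hβ
    · exfalso
      obtain ⟨β', hβ'⟩ := dvd_of_res hβ
      apply hyp k ((c' • x1', c' • x2'), (β', 0))
      simp only [R1, Prod.smul_mk, Prod.mk_sub_mk, Prod.mk.injEq, hx1, smul_smul, ← hc']
      simp [hx2, hβ']
    · obtain ⟨w1, w2, hw, e⟩ := hmem (β - 1) (hθ _ (by simp [hβ]))
      exact ⟨w1, w2, hw, 1, by simp, by rw [e]; ring⟩
    · obtain ⟨w1, w2, hw, e⟩ := hmem (β + 1) (hθ _ (by simp [hβ]))
      exact ⟨w1, w2, hw, -1, by simp, by rw [e]; ring⟩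

lemma nrm_a {a : O} (ha : a = 0 ∨ a = 1 ∨ a = θ ∨ a = 2) :
    nrm a = 0 ∨ nrm a = 1 ∨ nrm a = 3 ∨ nrm a = 4 := by
  rcases ha with rfl | rfl | rfl | rfl <;> simp [nrm]

lemma canon {z r : P} {a : O} (hz : N z = 2) (hr : N r = 1) (hza : K z r = a)
    (ha : a = 0 ∨ a = 1 ∨ a = θ ∨ a = 2) (hyp : Hyp z r) :
    ∃ g, Pres KP g ∧ g r = R1 ∧ g z = (((-a) • r1, 0), (((nrm a - 2 : ℤ) : O) * ω, 1)) := by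
  obtain ⟨g1, hg1, e1⟩ := flowA hr
  have k1 : K (g1 z) R1 = a := by rw [← e1, ← hza]; exact hg1 z r
  obtain ⟨g2, hg2, e2, q2⟩ := flowB (z := g1 z) (by rw [hg1.N, hz]) k1 ha
  have k2 : K (g2 (g1 z)) R1 = a := by rw [← e2, ← k1]; exact hg2 (g1 z) R1
  have n2 : N (g2 (g1 z)) = 2 := by rw [hg2.N, hg1.N, hz]
  have y2 : Hyp (g2 (g1 z)) R1 := by
    have := (hyp.map g1).map g2
    rwa [e1, e2] at this
  rcases hgz : g2 (g1 z) with ⟨⟨x1, x2⟩, β, q⟩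
  rw [hgz] at q2 k2 n2 y2
  simp only at q2
  subst q2
  rw [K_R1] at k2
  obtain ⟨g3, hg3, e3, f3⟩ := flowC x1 x2 β a n2 k2 (nrm_a ha) y2
  exact ⟨(g1.trans g2).trans g3, (hg1.trans hg2).trans hg3, by simp [e1, e2, e3],
    by simp [hgz, f3]⟩

end S11

namespace S11

def Φ : (Fin 10 → O) ≃ₗ[O] P where
  toFun x := ((![x 0, x 1, x 2, x 3], ![x 4, x 5, x 6, x 7]), (x 8, x 9))
  invFun v := ![v.1.1 0, v.1.1 1, v.1.1 2, v.1.1 3, v.1.2 0, v.1.2 1, v.1.2 2, v.1.2 3, v.2.1, v.2.2]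
  map_add' x y := by simp
  map_smul' a x := by simp
  left_inv x := by funext i; fin_cases i <;> rfl
  right_inv v := by
    obtain ⟨⟨x1, x2⟩, p, q⟩ := v
    refine Prod.ext (Prod.ext ?_ ?_) rfl
    · exact eext rfl rfl rfl rfl
    · exact eext rfl rfl rfl rfl

lemma Φ_apply (x : Fin 10 → O) :
    Φ x = ((![x 0, x 1, x 2, x 3], ![x 4, x 5, x 6, x 7]), (x 8, x 9)) := rfl

lemma sum10 (f : Fin 10 → O) : ∑ i, f i =
    f 0 + f 1 + f 2 + f 3 + f 4 + f 5 + f 6 + f 7 + f 8 + f 9 := by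
  rw [Fin.sum_univ_castSucc, Fin.sum_univ_castSucc, Fin.sum_univ_eight]; rfl

lemma psi_eq (x y : Fin 10 → O) : psi10 x y = θ * K (Φ x) (Φ y) := by
  have h3 := θ_sq
  rw [K_apply, κ_apply, κ_apply]
  simp only [Φ_apply]
  simp only [psi10, sum10]
  simp [gram10]
  linear_combination (x 0 * conj (y 0) + x 1 * conj (y 1) + x 2 * conj (y 2) + x 3 * conj (y 3)
    + x 4 * conj (y 4) + x 5 * conj (y 5) + x 6 * conj (y 6) + x 7 * conj (y 7)) * h3

end S11

namespace S11

lemma K_of_psi {x y : Fin 10 → O} {t : O} (h : psi10 x y = θ * t) : K (Φ x) (Φ y) = t := by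
  rw [psi_eq] at h; exact mul_left_cancel₀ θ_ne h

lemma N_smul (a : O) (x : P) : N (a • x) = nrm a * N x := by
  apply N_of_K
  simp only [map_smul, LinearMap.smul_apply, LinearMap.map_smulₛₗ, K_self, smul_eq_mul]
  push_cast
  rw [nrm_cast]; ring

lemma N_zo {zo : Fin 10 → O} (h : psi10 zo zo = 6) : N (Φ zo) = 2 := by
  apply N_of_K
  apply K_of_psi
  rw [h]; push_cast
  linear_combination 2 * θ_sq

lemma N_x {x : Fin 10 → O} (h : psi10 x x = 3) : N (Φ x) = 1 := by
  apply N_of_K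
  apply K_of_psi
  rw [h]; push_cast
  linear_combination θ_sq

/-- pairing -/
def av (zo x : Fin 10 → O) : O := K (Φ zo) (Φ x)

section
variable {zo x : Fin 10 → O}

lemma psi_zx : psi10 zo x = θ * av zo x := psi_eq _ _
lemma psi_xz : psi10 x zo = -θ * conj (av zo x) := by
  rw [psi_eq, K_skew (Φ zo) (Φ x), av]; ring

lemma psi_comb (hzo : psi10 zo zo = 6) (hx : psi10 x x = 3) (s t s' t' : O) :
    psi10 (s • zo + t • x) (s' • zo + t' • x) =
      6 * s * conj s' + 3 * t * conj t' + θ * (s * conj t' * av zo x)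
        - θ * (t * conj s' * conj (av zo x)) := by
  have h1 := psi_zx (zo := zo) (x := x)
  have h2 := psi_xz (zo := zo) (x := x)
  rw [psi_eq] at hzo hx h1 h2 ⊢
  simp only [map_add, map_smul, LinearMap.add_apply, LinearMap.smul_apply, LinearMap.map_smulₛₗ,
    smul_eq_mul]
  linear_combination s * conj s' * hzo + t * conj t' * hx + s * conj t' * h1 + t * conj s' * h2

lemma nrm_av (hzo : psi10 zo zo = 6) (hx : Admissible zo x) : nrm (av zo x) < 6 := by
  obtain ⟨h3, hpos, -⟩ := hx
  have hm : psi10 ((3 : O) • zo + (-(θ * av zo x)) • x) ((3 : O) • zo + (-(θ * av zo x)) • x)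
      = ((54 - 9 * nrm (av zo x) : ℤ) : O) := by
    rw [psi_comb hzo h3]; push_cast
    rw [nrm_cast]
    simp only [map_neg, map_mul, conj_θ, map_ofNat]
    linear_combination (3 * (av zo x) * conj (av zo x)) * θ_sq
  by_cases h0 : (3 : O) • zo + (-(θ * av zo x)) • x = 0
  · rw [h0] at hm
    have h1 : psi10 (0 : Fin 10 → O) 0 = ((0 : ℤ) : O) := by simp [psi10]
    rw [h1] at hm
    have := int_inj hm
    have := (small_nrm (av zo x)).2.2
    omega
  · obtain ⟨n, hn, e⟩ := hpos _ (Submodule.mem_span_pair.2 ⟨_, _, rfl⟩) h0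
    rw [hm] at e
    have e' : 54 - 9 * nrm (av zo x) = (n : ℤ) := int_inj (by rw [e]; simp)
    omega

lemma indep (hzo : psi10 zo zo = 6) (hx : Admissible zo x) {s t : O}
    (h : s • zo + t • x = 0) : s = 0 ∧ t = 0 := by
  have ha := nrm_av hzo hx
  have hN1 := N_x hx.1
  have hN2 := N_zo hzo
  have h' : s • Φ zo + t • Φ x = 0 := by rw [← map_smul, ← map_smul, ← map_add, h, map_zero]
  have e1 := congrArg (fun v => K v (Φ x)) h'
  have e2 := congrArg (fun v => K v (Φ zo)) h'
  simp only [map_add, map_smul, LinearMap.add_apply, LinearMap.smul_apply, smul_eq_mul, K_self,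
    hN1, hN2, map_zero, LinearMap.zero_apply, K_skew (Φ zo) (Φ x)] at e1 e2
  rw [← av] at e1 e2
  push_cast at e1 e2
  have e3 : s * ((nrm (av zo x) - 6 : ℤ) : O) = 0 := by
    push_cast; rw [nrm_cast]
    linear_combination conj (av zo x) * e1 - θ * e2 - 2 * s * θ_sq
  have hs : s = 0 := by
    rcases mul_eq_zero.1 e3 with h | h
    · exact h
    · have : nrm (av zo x) - 6 = 0 := int_inj (by rw [h]; simp)
      omega
  refine ⟨hs, ?_⟩
  rw [hs] at e1
  have : t * θ = 0 := by linear_combination -e1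
  exact (mul_eq_zero.1 this).resolve_right θ_ne

lemma hasDet (hzo : psi10 zo zo = 6) (hx : Admissible zo x) :
    HasDet (Mr zo x) ((18 - 3 * nrm (av zo x) : ℤ) : O) := by
  refine ⟨zo, x, Submodule.subset_span (by simp), Submodule.subset_span (by simp), rfl, ?_, ?_⟩
  · rw [LinearIndependent.pair_iff]
    intro s t h
    exact indep hzo hx h
  · rw [hzo, hx.1, psi_zx, psi_xz]; push_cast; rw [nrm_cast]
    linear_combination (av zo x) * conj (av zo x) * θ_sq

lemma indep_eq (hzo : psi10 zo zo = 6) (hx : Admissible zo x) {s t s' t' : O}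
    (h : s • zo + t • x = s' • zo + t' • x) : s = s' ∧ t = t' := by
  have := indep hzo hx (s := s - s') (t := t - t') (by
    have := sub_eq_zero.2 h
    rw [← this]; module)
  exact ⟨sub_eq_zero.1 this.1, sub_eq_zero.1 this.2⟩

lemma det_uniq (hzo : psi10 zo zo = 6) (hx : Admissible zo x) {d : O}
    (hd : HasDet (Mr zo x) d) : d = ((18 - 3 * nrm (av zo x) : ℤ) : O) := by
  obtain ⟨e1, e2, h1, h2, hs, -, rfl⟩ := hd
  obtain ⟨s1, t1, rfl⟩ := Submodule.mem_span_pair.1 h1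
  obtain ⟨s2, t2, rfl⟩ := Submodule.mem_span_pair.1 h2
  have hz : zo ∈ Mr zo x := Submodule.subset_span (by simp)
  have hx' : x ∈ Mr zo x := Submodule.subset_span (by simp)
  rw [← hs] at hz hx'
  obtain ⟨p, q, hpq⟩ := Submodule.mem_span_pair.1 hz
  obtain ⟨p', q', hpq'⟩ := Submodule.mem_span_pair.1 hx'
  obtain ⟨a1, a2⟩ := indep_eq hzo hx (s := p * s1 + q * s2) (t := p * t1 + q * t2) (s' := 1)
    (t' := 0) (by rw [one_smul, zero_smul, add_zero]; refine Eq.trans ?_ hpq; module)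
  obtain ⟨b1, b2⟩ := indep_eq hzo hx (s := p' * s1 + q' * s2) (t := p' * t1 + q' * t2) (s' := 0)
    (t' := 1) (by rw [one_smul, zero_smul, zero_add]; refine Eq.trans ?_ hpq'; module)
  have hdet : (p * q' - q * p') * (s1 * t2 - s2 * t1) = 1 := by
    linear_combination (p' * t1 + q' * t2) * a1 + b2 - (p' * s1 + q' * s2) * a2
  have hn : nrm (s1 * t2 - s2 * t1) = 1 := by
    have := congrArg nrm hdet
    rw [nrm_mul, nrm_one] at this
    exact Int.eq_one_of_mul_eq_one_left (nrm_nonneg _) this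
  have hu := unit_of_nrm hn
  simp only [psi_comb hzo hx.1]
  push_cast; rw [nrm_cast]
  simp only [map_sub, map_mul] at hu
  linear_combination (18 - 3 * av zo x * conj (av zo x)) * hu
    + (av zo x * conj (av zo x)) * (s1 * t2 - s2 * t1) * (conj s1 * conj t2 - conj s2 * conj t1) * θ_sq

lemma hyp_of (hzo : psi10 zo zo = 6) (hx : Admissible zo x) {u : O} (hu : u * conj u = 1) :
    Hyp (conj u • Φ zo) (Φ x) := by
  intro k y h
  have h1 : conj u • zo + (-k) • x = θ • Φ.symm y := by
    apply Φ.injective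
    simp only [map_add, map_smul, LinearEquiv.apply_symm_apply, ← h]
    module
  have h2 := hx.2.2 θ (Φ.symm y) θ_ne (by rw [← h1]; exact Submodule.mem_span_pair.2 ⟨_, _, rfl⟩)
  obtain ⟨s, t, hst⟩ := Submodule.mem_span_pair.1 h2
  rw [← hst] at h1
  obtain ⟨e1, -⟩ := indep_eq hzo hx (s' := θ * s) (t' := θ * t) (h1.trans (by module))
  have := congrArg nrm e1
  rw [nrm_conj, nrm_mul, nrm_unit hu, nrm_θ] at this
  omega

lemma canon' (hzo : psi10 zo zo = 6) (hx : Admissible zo x) {u c : O} (hu : u * conj u = 1)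
    (ha : av zo x = u * c) (hc : c = 0 ∨ c = 1 ∨ c = θ ∨ c = 2) :
    ∃ g, Pres KP g ∧ g (Φ x) = R1 ∧
      g (conj u • Φ zo) = (((-c) • r1, 0), (((nrm c - 2 : ℤ) : O) * ω, 1)) := by
  apply canon
  · rw [N_smul, nrm_conj, nrm_unit hu, N_zo hzo]; rfl
  · exact N_x hx.1
  · rw [map_smul, LinearMap.smul_apply, smul_eq_mul, ← av, ha]
    linear_combination c * hu
  · exact hc
  · exact hyp_of hzo hx hu

end

theorem part2 (zo : Fin 10 → O) (hzo : psi10 zo zo = 6) (x x' : Fin 10 → O) (d : O)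
    (hx : Admissible zo x) (hx' : Admissible zo x') (hd : HasDet (Mr zo x) d)
    (hd' : HasDet (Mr zo x') d) :
      ∃ g : (Fin 10 → O) ≃ₗ[O] (Fin 10 → O), IsUnitary10 g ∧
        g '' {y : Fin 10 → O | psi10 y zo = 0} = {y : Fin 10 → O | psi10 y zo = 0} ∧
        g x = x' := by
  have hnn : nrm (av zo x) = nrm (av zo x') := by
    have := int_inj ((det_uniq hzo hx hd).symm.trans (det_uniq hzo hx' hd'))
    omega
  obtain ⟨u, c, hu, ha, hc, hcn⟩ := assoc_of_small _ (nrm_av hzo hx)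
  obtain ⟨u', c', hu', ha', hc', hcn'⟩ := assoc_of_small _ (nrm_av hzo hx')
  have hcc : c' = c := by
    have h : nrm c = nrm c' := by omega
    have n2 : nrm (2 : O) = 4 := by simp [nrm]
    rcases hc with rfl | rfl | rfl | rfl <;> rcases hc' with rfl | rfl | rfl | rfl <;>
      first | rfl | (simp [n2] at h)
  subst hcc
  obtain ⟨g, hg, e1, e2⟩ := canon' hzo hx hu ha hc
  obtain ⟨g', hg', e1', e2'⟩ := canon' hzo hx' hu' ha' hc'
  obtain ⟨h, hh⟩ : ∃ h, h = g.trans g'.symm := ⟨_, rfl⟩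
  have hP : Pres KP h := by rw [hh]; exact hg.trans hg'.symm
  have hX : h (Φ x) = Φ x' := by rw [hh, LinearEquiv.trans_apply, e1, ← e1']; simp
  have hZ0 : h (conj u • Φ zo) = conj u' • Φ zo := by
    rw [hh, LinearEquiv.trans_apply, e2, ← e2', LinearEquiv.symm_apply_apply]
  have hZ : h (Φ zo) = (u * conj u') • Φ zo := by
    rw [mul_smul, ← hZ0, map_smul, smul_smul, hu, one_smul]
  have hv : conj (u * conj u') ≠ 0 := by
    intro h0
    have h1 := congrArg nrm h0
    rw [nrm_conj, nrm_mul, nrm_conj, nrm_unit hu, nrm_unit hu'] at h1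
    simp at h1
  obtain ⟨G, hG⟩ : ∃ G, G = (Φ.trans h).trans Φ.symm := ⟨_, rfl⟩
  have hΦG : ∀ y, Φ (G y) = h (Φ y) := by intro y; simp [hG]
  have hGu : IsUnitary10 G := by
    intro y z
    rw [psi_eq, psi_eq, hΦG, hΦG]
    exact congrArg (θ * ·) (hP (Φ y) (Φ z))
  have hkey : ∀ y, psi10 y zo = conj (u * conj u') * psi10 (G y) zo := by
    intro y
    rw [← hGu y zo, psi_eq, psi_eq, hΦG zo, hZ, LinearMap.map_smulₛₗ, smul_eq_mul]
    ring
  refine ⟨G, hGu, ?_, ?_⟩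
  · ext y
    constructor
    · rintro ⟨w, hw, rfl⟩
      rw [Set.mem_ofPred_eq] at hw ⊢
      rw [hkey] at hw
      exact (mul_eq_zero.1 hw).resolve_left hv
    · intro hy
      refine ⟨G.symm y, ?_, G.apply_symm_apply y⟩
      rw [Set.mem_ofPred_eq] at hy ⊢
      rw [hkey, G.apply_symm_apply, hy, mul_zero]
  · apply Φ.injective
    rw [hΦG, hX]

end S11

/-- Let `z_o` be a 6-vector of `Λ` and `Λ_o = z_o^⊥`.  For every
admissible 3-vector `r` the `d`-invariant `d(r)` of `M_r` lies in `{6, 9, 15, 18}`, and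
any two admissible 3-vectors with the same `d`-invariant are conjugate under an element
`g ∈ U(Λ)` with `g(Λ_o) = Λ_o`. -/
theorem statement11 (zo : Fin 10 → O) (hzo : psi10 zo zo = 6) :
    (∀ x : Fin 10 → O, Admissible zo x →
      ∃ d ∈ ({6, 9, 15, 18} : Set O), HasDet (Mr zo x) d) ∧
    (∀ x x' : Fin 10 → O, ∀ d : O,
      Admissible zo x → Admissible zo x' →
      HasDet (Mr zo x) d → HasDet (Mr zo x') d →
      ∃ g : (Fin 10 → O) ≃ₗ[O] (Fin 10 → O), IsUnitary10 g ∧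
        g '' {y : Fin 10 → O | psi10 y zo = 0} = {y : Fin 10 → O | psi10 y zo = 0} ∧
        g x = x') := by
  refine ⟨fun x hx => ⟨_, ?_, S11.hasDet hzo hx⟩, fun x x' d => S11.part2 zo hzo x x' d⟩
  have h := S11.nrm_av hzo hx
  have h0 := S11.nrm_nonneg (S11.av zo x)
  obtain ⟨s2, s5, -⟩ := S11.small_nrm (S11.av zo x)
  generalize S11.nrm (S11.av zo x) = n at *
  have hn : n = 0 ∨ n = 1 ∨ n = 3 ∨ n = 4 := by omega
  rcases hn with rfl | rfl | rfl | rfl <;> norm_num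

end
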